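/- arXiv:1104.3218 — 16 statements merged into one kernel-verified Lean document; each statement's English description precedes it below -/
import Mathlib

section
/- For every x in the open interval (−1,1), the limit as ε → 0⁺ of 2∫_{−1}^{1} (x−t)·(2/π)·√(1−t²)/((x−t)²+ε²) dt exists and equals 4x. (This is the reducer of the Chebyshev measure of the second kind of density ρ(x)=(2/π)√(1−x²) on [−1,1].) -/
open MeasureTheory Filter Set

lemma aux_hasSum (w : ℂ) (hw : ‖w‖ < 1) (θ : ℝ) :
    HasSum (fun n : ℕ => w ^ n * ((Real.sin ((n + 1 : ℝ) * θ) * Real.sin θ : ℝ) : ℂ))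
      ((Real.sin θ : ℂ) ^ 2 / (1 - 2 * w * (Real.cos θ : ℂ) + w ^ 2)) := by
  set u : ℂ := Complex.exp (θ * Complex.I) with hu
  set v : ℂ := Complex.exp (-θ * Complex.I) with hv
  have huv : u * v = 1 := by rw [hu, hv, ← Complex.exp_add]; simp
  have nu : ‖u‖ = 1 := Complex.norm_exp_ofReal_mul_I θ
  have nv : ‖v‖ = 1 := by
    have := Complex.norm_exp_ofReal_mul_I (-θ)
    rwa [Complex.ofReal_neg] at this
  have h1 : ‖w * u‖ < 1 := by rw [norm_mul, nu, mul_one]; exact hw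
  have h2 : ‖w * v‖ < 1 := by rw [norm_mul, nv, mul_one]; exact hw
  have n1 : 1 - w * u ≠ 0 := by
    intro h
    have : w * u = 1 := by linear_combination -h
    rw [this] at h1; simp at h1
  have n2 : 1 - w * v ≠ 0 := by
    intro h
    have : w * v = 1 := by linear_combination -h
    rw [this] at h2; simp at h2
  have hs : (Real.sin θ : ℂ) = (v - u) * Complex.I / 2 := by
    rw [Complex.ofReal_sin, Complex.sin]
  have hc : (Real.cos θ : ℂ) = (u + v) / 2 := by
    rw [Complex.ofReal_cos, Complex.cos]
  have H := (((hasSum_geometric_of_norm_lt_one h2).mul_left v).sub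
    ((hasSum_geometric_of_norm_lt_one h1).mul_left u)).mul_left
      (Complex.I / 2 * (Real.sin θ : ℂ))
  convert H using 1
  · rfl
  · funext n
    have e : ((Real.sin ((n + 1 : ℝ) * θ) : ℝ) : ℂ) = (v ^ (n+1) - u ^ (n+1)) * Complex.I / 2 := by
      rw [Complex.ofReal_sin, Complex.sin, hu, hv, ← Complex.exp_nat_mul, ← Complex.exp_nat_mul]
      congr 4 <;> (push_cast; ring_nf)
    rw [Complex.ofReal_mul, e]
    ring
  · have e : 1 - 2 * w * (Real.cos θ : ℂ) + w ^ 2 = (1 - w * u) * (1 - w * v) := by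
      rw [hc]; linear_combination (-w^2) * huv
    have e2 : v * (1 - w * v)⁻¹ - u * (1 - w * u)⁻¹ = (v - u) / ((1 - w * u) * (1 - w * v)) := by
      rw [← div_eq_mul_inv, ← div_eq_mul_inv, div_sub_div _ _ n2 n1,
        div_eq_div_iff (mul_ne_zero n2 n1) (mul_ne_zero n1 n2)]
      ring
    rw [e, e2, hs]
    ring

lemma aux_cos (m : ℝ) (k : ℕ) (hk : m = k) (h : k ≠ 0) :
    ∫ θ in (0:ℝ)..Real.pi, Real.cos (m * θ) = 0 := by
  subst hk
  rw [intervalIntegral.integral_comp_mul_left (fun y => Real.cos y) (Nat.cast_ne_zero.mpr h)]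
  simp [Real.sin_nat_mul_pi]

lemma aux_orth (n : ℕ) :
    ∫ θ in (0:ℝ)..Real.pi, (Real.sin ((n + 1 : ℝ) * θ) * Real.sin θ) =
      if n = 0 then Real.pi / 2 else 0 := by
  have e : ∀ θ : ℝ, Real.sin ((n + 1 : ℝ) * θ) * Real.sin θ =
      (1/2) * (Real.cos ((n:ℝ) * θ) - Real.cos ((n + 2 : ℝ) * θ)) := by
    intro θ
    have a : (n:ℝ) * θ = (n + 1 : ℝ) * θ - θ := by ring
    have b : (n + 2 : ℝ) * θ = (n + 1 : ℝ) * θ + θ := by ring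
    rw [a, b, Real.cos_sub, Real.cos_add]; ring
  simp_rw [e]
  rw [intervalIntegral.integral_const_mul, intervalIntegral.integral_sub
    (Continuous.intervalIntegrable (by fun_prop) _ _)
    (Continuous.intervalIntegrable (by fun_prop) _ _),
    aux_cos (n + 2 : ℝ) (n+2) (by push_cast; ring) (by omega)]
  split_ifs with h
  · subst h; simp; ring
  · rw [aux_cos (n:ℝ) n rfl h]; simp

lemma aux_int (w : ℂ) (hw : ‖w‖ < 1) :
    ∫ θ in (0:ℝ)..Real.pi, ((Real.sin θ : ℂ) ^ 2 / (1 - 2 * w * (Real.cos θ : ℂ) + w ^ 2))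
      = (Real.pi / 2 : ℂ) := by
  have H := intervalIntegral.hasSum_integral_of_dominated_convergence (μ := volume)
    (a := 0) (b := Real.pi)
    (F := fun (n : ℕ) (θ : ℝ) => w ^ n * ((Real.sin ((n + 1 : ℝ) * θ) * Real.sin θ : ℝ) : ℂ))
    (f := fun θ : ℝ => (Real.sin θ : ℂ) ^ 2 / (1 - 2 * w * (Real.cos θ : ℂ) + w ^ 2))
    (fun n _ => ‖w‖ ^ n)
    (fun n => Continuous.aestronglyMeasurable (by fun_prop))
    (fun n => by
      refine Eventually.of_forall fun θ _ => ?_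
      rw [norm_mul, norm_pow, Complex.norm_real, norm_mul]
      have h1 : ‖Real.sin ((n + 1 : ℝ) * θ)‖ ≤ 1 := Real.abs_sin_le_one _
      have h2 : ‖Real.sin θ‖ ≤ 1 := Real.abs_sin_le_one _
      have := mul_le_one₀ h1 (norm_nonneg _) h2
      exact mul_le_of_le_one_right (by positivity) this)
    (Eventually.of_forall fun θ _ => summable_geometric_of_lt_one (norm_nonneg _) hw)
    (by simp)
    (Eventually.of_forall fun θ _ => aux_hasSum w hw θ)
  simp_rw [intervalIntegral.integral_const_mul, intervalIntegral.integral_ofReal, aux_orth] at H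
  have H2 := hasSum_ite_eq (0:ℕ) (Real.pi / 2 : ℂ)
  refine H.unique ?_
  convert H2 using 1
  · rfl
  · funext n
    split_ifs with h
    · subst h; simp
    · simp

lemma aux_root (x ε : ℝ) (hε : 0 < ε) :
    ∃ w : ℂ, ‖w‖ < 1 ∧ w ^ 2 - 2 * (x + ε * Complex.I) * w + 1 = 0 := by
  set z : ℂ := x + ε * Complex.I with hz
  obtain ⟨s, hs⟩ := IsAlgClosed.exists_pow_nat_eq (z ^ 2 - 1) (n := 2) (by norm_num)
  have hp : (z - s) * (z + s) = 1 := by linear_combination -hs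
  have hn : ‖z - s‖ * ‖z + s‖ = 1 := by rw [← norm_mul, hp, norm_one]
  rcases lt_trichotomy ‖z - s‖ 1 with h | h | h
  · exact ⟨z - s, h, by linear_combination hs⟩
  · exfalso
    have h1 : z + s = (starRingEnd ℂ) (z - s) := by
      have : (z - s) * (starRingEnd ℂ) (z - s) = 1 := by
        rw [Complex.mul_conj, Complex.normSq_eq_norm_sq, h]; simp
      have h0 : z - s ≠ 0 := by intro h0; rw [h0] at h; simp at h
      exact mul_left_cancel₀ h0 (hp.trans this.symm)
    have := congrArg Complex.im h1
    simp [hz] at this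
    linarith
  · refine ⟨z + s, ?_, by linear_combination hs⟩
    nlinarith [norm_nonneg (z + s)]

lemma aux_val (x ε : ℝ) (hε : 0 < ε) (w : ℂ) (hw : ‖w‖ < 1)
    (h : w ^ 2 - 2 * (x + ε * Complex.I) * w + 1 = 0) :
    ∫ t in (-1 : ℝ)..1,
          (x - t) * ((2 / Real.pi) * Real.sqrt (1 - t ^ 2)) / ((x - t) ^ 2 + ε ^ 2) = 2 * w.re := by
  have w0 : w ≠ 0 := by rintro rfl; simp at h
  have hd : ∀ t : ℝ, (x - t) ^ 2 + ε ^ 2 ≠ 0 := fun t => by positivity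
  have hzt : ∀ t : ℝ, (x + ε * Complex.I) - (t:ℂ) ≠ 0 := by
    intro t h0
    have := congrArg Complex.im h0
    simp at this
    exact hε.ne' this
  set g : ℝ → ℝ := fun t =>
    (x - t) * ((2 / Real.pi) * Real.sqrt (1 - t ^ 2)) / ((x - t) ^ 2 + ε ^ 2) with hg
  have gc : Continuous g := by
    apply Continuous.div (by fun_prop) (by fun_prop) hd
  have sub := intervalIntegral.integral_comp_mul_deriv (a := 0) (b := Real.pi)
    (f := Real.cos) (f' := fun θ => - Real.sin θ) (g := g)
    (fun θ _ => Real.hasDerivAt_cos θ) (by fun_prop) gc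
  rw [Real.cos_zero, Real.cos_pi, intervalIntegral.integral_symm (-1) 1] at sub
  have I1 := aux_int w hw
  have cI : Continuous fun θ : ℝ => (Real.sin θ : ℂ) ^ 2 / ((x + ε * Complex.I) - (Real.cos θ : ℂ)) :=
    Continuous.div (by fun_prop) (by fun_prop) (fun θ => hzt _)
  have I2 : ∫ θ in (0:ℝ)..Real.pi, (Real.sin θ : ℂ) ^ 2 / ((x + ε * Complex.I) - (Real.cos θ : ℂ))
      = Real.pi * w := by
    have : ∀ θ : ℝ, (Real.sin θ : ℂ) ^ 2 / ((x + ε * Complex.I) - (Real.cos θ : ℂ)) =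
        (2 * w) * ((Real.sin θ : ℂ) ^ 2 / (1 - 2 * w * (Real.cos θ : ℂ) + w ^ 2)) := by
      intro θ
      have e : 1 - 2 * w * (Real.cos θ : ℂ) + w ^ 2 =
        (2 * w) * ((x + ε * Complex.I) - (Real.cos θ : ℂ)) := by linear_combination h
      have := hzt (Real.cos θ)
      rw [e]
      field_simp
    simp_rw [this]
    rw [intervalIntegral.integral_const_mul, I1]
    ring
  have I3 := Complex.reCLM.intervalIntegral_comp_comm (cI.intervalIntegrable (μ := volume) 0 Real.pi)
  rw [I2] at I3
  have key : ∫ θ in (0:ℝ)..Real.pi, (g ∘ Real.cos) θ * - Real.sin θ =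
      -(2 / Real.pi) * ∫ θ in (0:ℝ)..Real.pi,
        Complex.reCLM ((Real.sin θ : ℂ) ^ 2 / ((x + ε * Complex.I) - (Real.cos θ : ℂ))) := by
    rw [← intervalIntegral.integral_const_mul]
    apply intervalIntegral.integral_congr
    intro θ hθ
    rw [uIcc_of_le Real.pi_pos.le] at hθ
    have s0 : 0 ≤ Real.sin θ := Real.sin_nonneg_of_mem_Icc hθ
    have sq : Real.sqrt (1 - Real.cos θ ^ 2) = Real.sin θ := by
      rw [← Real.sin_sq, Real.sqrt_sq s0]
    have e : (Real.sin θ : ℂ) ^ 2 / ((x + ε * Complex.I) - (Real.cos θ : ℂ)) =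
        ((Real.sin θ ^ 2 / ((x - Real.cos θ) ^ 2 + ε ^ 2) : ℝ) : ℂ) *
          (((x - Real.cos θ : ℝ) : ℂ) - (ε : ℝ) * Complex.I) := by
      have a := hzt (Real.cos θ)
      have b : (((x - Real.cos θ) ^ 2 + ε ^ 2 : ℝ) : ℂ) ≠ 0 := by
        exact_mod_cast hd (Real.cos θ)
      rw [Complex.ofReal_div, div_mul_eq_mul_div, div_eq_div_iff a b]
      simp only [Complex.ofReal_add, Complex.ofReal_pow, Complex.ofReal_sub]
      linear_combination (Real.sin θ : ℂ) ^ 2 * (ε:ℂ)^2 * Complex.I_sq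
    simp only [e, Function.comp, hg, sq, Complex.reCLM_apply, Complex.re_ofReal_mul]
    have : (((x - Real.cos θ : ℝ) : ℂ) - (ε : ℝ) * Complex.I).re = x - Real.cos θ := by
      rw [Complex.sub_re, Complex.ofReal_re, Complex.re_ofReal_mul, Complex.I_re]; ring
    rw [this]
    ring
  rw [key, I3] at sub
  have : Complex.reCLM (Real.pi * w) = Real.pi * w.re := by simp
  rw [this] at sub
  have hp := Real.pi_ne_zero
  have e : -(2 / Real.pi) * (Real.pi * w.re) = -(2 * w.re) := by field_simp
  rw [e] at sub
  linarith

lemma aux_est (x ε : ℝ) (w : ℂ)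
    (h : w ^ 2 - 2 * (x + ε * Complex.I) * w + 1 = 0) :
    |w.re - x| = Real.sqrt ((‖((x:ℂ) + ε * Complex.I) ^ 2 - 1‖ +
      (((x:ℂ) + ε * Complex.I) ^ 2 - 1).re) / 2) := by
  set s : ℂ := w - (x + ε * Complex.I) with hs
  have e : ((x:ℂ) + ε * Complex.I) ^ 2 - 1 = s ^ 2 := by linear_combination -h
  have r : w.re - x = s.re := by simp [hs]
  rw [e, r, norm_pow, ← Complex.normSq_eq_norm_sq, Complex.normSq_apply, ← Real.sqrt_sq_eq_abs]
  congr 1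
  simp [pow_two]

/-- The reducer of the Chebyshev measure of the second kind of density
`ρ(x) = (2/π)√(1−x²)` on `[−1,1]`: for every `x ∈ (−1,1)`,
`lim_{ε→0⁺} 2∫_{−1}^{1} (x−t)·(2/π)√(1−t²)/((x−t)²+ε²) dt = 4x`. -/
theorem reducer_chebyshev_second_kind (x : ℝ) (hx : x ∈ Ioo (-1 : ℝ) 1) :
    Tendsto
      (fun ε : ℝ =>
        2 * ∫ t in (-1 : ℝ)..1,
          (x - t) * ((2 / Real.pi) * Real.sqrt (1 - t ^ 2)) / ((x - t) ^ 2 + ε ^ 2))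
      (nhdsWithin 0 (Ioi 0)) (nhds (4 * x)) := by
  rw [tendsto_iff_dist_tendsto_zero]
  have hc : Continuous fun ε : ℝ => 4 * Real.sqrt ((‖((x:ℂ) + ε * Complex.I) ^ 2 - 1‖ +
      (((x:ℂ) + ε * Complex.I) ^ 2 - 1).re) / 2) := by
    have : Continuous fun ε : ℝ => ((x:ℂ) + ε * Complex.I) ^ 2 - 1 := by fun_prop
    have h2 := Complex.continuous_re.comp this
    have h3 := this.norm
    exact continuous_const.mul (Real.continuous_sqrt.comp ((h3.add h2).div_const 2))
  have ht := (hc.tendsto 0).mono_left (nhdsWithin_le_nhds (s := Ioi 0))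
  have e0 : 4 * Real.sqrt ((‖((x:ℂ) + (0:ℝ) * Complex.I) ^ 2 - 1‖ +
      (((x:ℂ) + (0:ℝ) * Complex.I) ^ 2 - 1).re) / 2) = 0 := by
    have : ((x:ℂ) + (0:ℝ) * Complex.I) ^ 2 - 1 = ((x ^ 2 - 1 : ℝ) : ℂ) := by
      push_cast; ring
    rw [this, Complex.norm_real, Complex.ofReal_re, Real.norm_eq_abs,
      abs_of_nonpos (by nlinarith [hx.1, hx.2])]
    simp
  rw [e0] at ht
  refine ht.congr' ?_
  filter_upwards [self_mem_nhdsWithin] with ε hε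
  obtain ⟨w, hw, h⟩ := aux_root x ε hε
  rw [aux_val x ε hε w hw h, ← aux_est x ε w h, Real.dist_eq,
    show 2 * (2 * w.re) - 4 * x = 4 * (w.re - x) by ring, abs_mul]
  norm_num
end

section
/- Let ρ : [0,1] → ℝ be a nonnegative function satisfying a Lipschitz condition on [0,1]. Then for every x in the open interval (0,1), the limit as ε → 0⁺ of 2∫₀¹ (x−t)ρ(t)/((x−t)²+ε²) dt exists and equals 2·ρ(x)·ln(x/(1−x)) − 2∫₀¹ (ρ(t)−ρ(x))/(t−x) dt. -/
open MeasureTheory Filter Set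

/-- For a nonnegative Lipschitz density `ρ` on `[0,1]` and every `x ∈ (0,1)`, the reducer
limit exists and equals `2ρ(x)·ln(x/(1−x)) − 2∫₀¹ (ρ(t)−ρ(x))/(t−x) dt`. -/
theorem reducer_of_lipschitz (ρ : ℝ → ℝ) (K : NNReal)
    (hlip : LipschitzOnWith K ρ (Icc (0 : ℝ) 1))
    (hnonneg : ∀ t ∈ Icc (0 : ℝ) 1, 0 ≤ ρ t)
    (x : ℝ) (hx : x ∈ Ioo (0 : ℝ) 1) :
    Tendsto
      (fun ε : ℝ => 2 * ∫ t in (0 : ℝ)..1, (x - t) * ρ t / ((x - t) ^ 2 + ε ^ 2))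
      (nhdsWithin 0 (Ioi 0))
      (nhds (2 * ρ x * Real.log (x / (1 - x)) -
        2 * ∫ t in (0 : ℝ)..1, (ρ t - ρ x) / (t - x))) := by
  obtain ⟨hx0, hx1⟩ := hx
  have hxm : x ∈ Icc (0 : ℝ) 1 := ⟨hx0.le, hx1.le⟩
  have hcont : ContinuousOn ρ (uIcc (0 : ℝ) 1) := by
    rw [uIcc_of_le zero_le_one]; exact hlip.continuousOn
  have hA : ∀ ε : ℝ, 0 < ε → ∀ t : ℝ, (x - t) ^ 2 + ε ^ 2 ≠ 0 := by
    intro ε hε t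
    positivity
  have hI1 : ∀ ε : ℝ, 0 < ε → IntervalIntegrable
      (fun t => (x - t) / ((x - t) ^ 2 + ε ^ 2)) volume 0 1 := by
    intro ε hε
    apply Continuous.intervalIntegrable
    exact Continuous.div (by fun_prop) (by fun_prop) (hA ε hε)
  have hI2c : ∀ ε : ℝ, 0 < ε → ContinuousOn
      (fun t => (x - t) * (ρ t - ρ x) / ((x - t) ^ 2 + ε ^ 2)) (uIcc 0 1) := by
    intro ε hε
    exact ContinuousOn.div (by fun_prop) (by fun_prop) (fun t _ => hA ε hε t)
  have hcalc : ∀ ε : ℝ, 0 < ε → ∫ t in (0 : ℝ)..1, (x - t) / ((x - t) ^ 2 + ε ^ 2)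
      = (Real.log (x ^ 2 + ε ^ 2) - Real.log ((x - 1) ^ 2 + ε ^ 2)) / 2 := by
    intro ε hε
    rw [intervalIntegral.integral_eq_sub_of_hasDerivAt
      (f := fun t => -(Real.log ((x - t) ^ 2 + ε ^ 2)) / 2) _ (hI1 ε hε)]
    · simp only [sub_zero]; ring
    · intro t _
      have h1 : HasDerivAt (fun t : ℝ => (x - t) ^ 2 + ε ^ 2) (-(2 * (x - t))) t := by
        have := (((hasDerivAt_id' t).const_sub x).fun_pow 2).add_const (ε ^ 2)
        refine this.congr_deriv ?_
        norm_num
      have h2 := ((h1.log (hA ε hε t)).neg).div_const 2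
      refine h2.congr_deriv ?_
      have := hA ε hε t
      field_simp
  have hsplit : ∀ ε : ℝ, 0 < ε →
      2 * ∫ t in (0 : ℝ)..1, (x - t) * ρ t / ((x - t) ^ 2 + ε ^ 2) =
      ρ x * (Real.log (x ^ 2 + ε ^ 2) - Real.log ((x - 1) ^ 2 + ε ^ 2)) +
      2 * ∫ t in (0 : ℝ)..1, (x - t) * (ρ t - ρ x) / ((x - t) ^ 2 + ε ^ 2) := by
    intro ε hε
    have : ∀ t, (x - t) * ρ t / ((x - t) ^ 2 + ε ^ 2) =
      ρ x * ((x - t) / ((x - t) ^ 2 + ε ^ 2)) +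
        (x - t) * (ρ t - ρ x) / ((x - t) ^ 2 + ε ^ 2) := by
      intro t; ring
    simp_rw [this]
    rw [intervalIntegral.integral_add ((hI1 ε hε).const_mul _) (hI2c ε hε).intervalIntegrable,
      intervalIntegral.integral_const_mul, hcalc ε hε]
    ring
  have hlim1 : Tendsto (fun ε : ℝ =>
      ρ x * (Real.log (x ^ 2 + ε ^ 2) - Real.log ((x - 1) ^ 2 + ε ^ 2)))
      (nhdsWithin 0 (Ioi 0)) (nhds (2 * ρ x * Real.log (x / (1 - x)))) := by
    have hc : ContinuousAt (fun ε : ℝ =>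
      ρ x * (Real.log (x ^ 2 + ε ^ 2) - Real.log ((x - 1) ^ 2 + ε ^ 2))) 0 := by
      have h3 : x ^ 2 + (0 : ℝ) ^ 2 ≠ 0 := by positivity
      have h4 : (x - 1) ^ 2 + (0 : ℝ) ^ 2 ≠ 0 := by nlinarith
      have h5 : ContinuousAt (fun ε : ℝ => Real.log (x ^ 2 + ε ^ 2)) 0 :=
        ContinuousAt.log (f := fun ε : ℝ => x ^ 2 + ε ^ 2) (by fun_prop) h3
      have h6 : ContinuousAt (fun ε : ℝ => Real.log ((x - 1) ^ 2 + ε ^ 2)) 0 :=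
        ContinuousAt.log (f := fun ε : ℝ => (x - 1) ^ 2 + ε ^ 2) (by fun_prop) h4
      exact continuousAt_const.mul (h5.sub h6)
    have := hc.tendsto.mono_left (nhdsWithin_le_nhds (s := Ioi 0))
    convert this using 2
    have h5 : (x - 1) ^ 2 + (0 : ℝ) ^ 2 = (1 - x) ^ 2 := by ring
    have h6 : x ^ 2 + (0 : ℝ) ^ 2 = x ^ 2 := by ring
    rw [h5, h6, Real.log_div hx0.ne' (by linarith), Real.log_pow, Real.log_pow]
    push_cast
    ring
  have hlim2 : Tendsto (fun ε : ℝ =>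
      ∫ t in (0 : ℝ)..1, (x - t) * (ρ t - ρ x) / ((x - t) ^ 2 + ε ^ 2))
      (nhdsWithin 0 (Ioi 0)) (nhds (∫ t in (0 : ℝ)..1, -((ρ t - ρ x) / (t - x)))) := by
    apply intervalIntegral.tendsto_integral_filter_of_dominated_convergence (fun _ => (K : ℝ))
    · filter_upwards [self_mem_nhdsWithin] with ε hε
      exact ((hI2c ε hε).mono uIoc_subset_uIcc).aestronglyMeasurable measurableSet_uIoc
    · filter_upwards [self_mem_nhdsWithin] with ε hε
      refine Eventually.of_forall fun t ht => ?_
      rw [uIoc_of_le zero_le_one] at ht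
      have hd := hlip.dist_le_mul t ⟨ht.1.le, ht.2⟩ x hxm
      rw [Real.dist_eq, Real.dist_eq, abs_sub_comm t x] at hd
      have hp : 0 < (x - t) ^ 2 + ε ^ 2 := by
        have : (0 : ℝ) < ε := hε
        positivity
      rw [Real.norm_eq_abs, abs_div, abs_mul, abs_of_pos hp, div_le_iff₀ hp]
      have h7 := mul_le_mul_of_nonneg_left hd (abs_nonneg (x - t))
      have h8 : |x - t| * (K * |x - t|) = K * (x - t) ^ 2 := by
        rw [← sq_abs (x - t)]; ring
      have h9 : 0 ≤ (K : ℝ) * ε ^ 2 := by positivity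
      linarith
    · exact intervalIntegrable_const
    · refine Eventually.of_forall fun t _ => ?_
      by_cases h : t = x
      · subst h; simp
      · have hne : x - t ≠ 0 := sub_ne_zero.mpr (Ne.symm h)
        have hne' : t - x ≠ 0 := sub_ne_zero.mpr h
        have h3 : (x - t) ^ 2 + (0 : ℝ) ^ 2 ≠ 0 := by positivity
        have hc : ContinuousAt (fun ε : ℝ =>
          (x - t) * (ρ t - ρ x) / ((x - t) ^ 2 + ε ^ 2)) 0 :=
          ContinuousAt.div (by fun_prop) (by fun_prop) h3
        have := hc.tendsto.mono_left (nhdsWithin_le_nhds (s := Ioi 0))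
        convert this using 2
        have h6 : (x - t) ^ 2 + (0 : ℝ) ^ 2 = (x - t) ^ 2 := by ring
        rw [h6, ← neg_sub x t, div_neg, neg_neg]
        field_simp
  have hfin := hlim1.add (hlim2.const_mul 2)
  rw [intervalIntegral.integral_neg, mul_neg, ← sub_eq_add_neg] at hfin
  refine hfin.congr' ?_
  filter_upwards [self_mem_nhdsWithin] with ε hε
  exact (hsplit ε hε).symm
end

section
/- Let ρ : [0,1] → ℝ be a nonnegative function of class C¹ on [0,1]. Then for every x in the open interval (0,1), the reducer of ρ satisfies φ(x) = 2·[∫₀¹ ρ'(t)·ln|1 − t/x| dt + ρ(1)·ln(x/(1−x))]. -/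
open MeasureTheory Filter Set

/-- For a nonnegative density `ρ` of class `C¹` on `[0,1]` (with derivative `ρ'`) and
every `x ∈ (0,1)`, the reducer satisfies
`φ(x) = 2·[∫₀¹ ρ'(t)·ln|1 − t/x| dt + ρ(1)·ln(x/(1−x))]`. -/
theorem reducer_of_C1 (ρ ρ' : ℝ → ℝ)
    (hderiv : ∀ t ∈ Icc (0 : ℝ) 1, HasDerivWithinAt ρ (ρ' t) (Icc (0 : ℝ) 1) t)
    (hderiv_cont : ContinuousOn ρ' (Icc (0 : ℝ) 1))
    (hnonneg : ∀ t ∈ Icc (0 : ℝ) 1, 0 ≤ ρ t)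
    (x : ℝ) (hx : x ∈ Ioo (0 : ℝ) 1) :
    Tendsto
      (fun ε : ℝ => 2 * ∫ t in (0 : ℝ)..1, (x - t) * ρ t / ((x - t) ^ 2 + ε ^ 2))
      (nhdsWithin 0 (Ioi 0))
      (nhds (2 * ((∫ t in (0 : ℝ)..1, ρ' t * Real.log |1 - t / x|) +
        ρ 1 * Real.log (x / (1 - x))))) := by
  obtain ⟨hx0, hx1⟩ := hx
  have h01 : uIcc (0:ℝ) 1 = Icc 0 1 := uIcc_of_le zero_le_one
  have hρc : ContinuousOn ρ (Icc 0 1) := fun t ht => (hderiv t ht).continuousWithinAt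
  let G : ℝ → ℝ → ℝ := fun ε t => (1/2) * Real.log ((x - t)^2 + ε^2) - Real.log x
  have hGc : ∀ ε : ℝ, 0 < ε → Continuous (G ε) := by
    intro ε hε
    have : ∀ t, (x - t)^2 + ε^2 ≠ 0 := fun t => by positivity
    simp only [G]
    fun_prop (disch := assumption)
  have hGd : ∀ ε : ℝ, 0 < ε → ∀ t, HasDerivAt (G ε) (-((x - t) / ((x - t)^2 + ε^2))) t := by
    intro ε hε t
    have h0 : (x - t)^2 + ε^2 ≠ 0 := by positivity
    have h1 : HasDerivAt (fun t => (x - t)^2 + ε^2) (-(2 * (x - t))) t := by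
      have := (((hasDerivAt_id t).const_sub x).pow 2).add_const (ε^2)
      refine HasDerivAt.congr_deriv this ?_
      simp
    have := ((h1.log h0).const_mul (1/2)).sub_const (Real.log x)
    refine HasDerivAt.congr_deriv this ?_
    field_simp
  have hibp : ∀ ε : ℝ, 0 < ε → ∫ t in (0 : ℝ)..1, (x - t) * ρ t / ((x - t) ^ 2 + ε ^ 2)
      = (∫ t in (0:ℝ)..1, ρ' t * G ε t) - (ρ 1 * G ε 1 - ρ 0 * G ε 0) := by
    intro ε hε
    have hne : ∀ t, (x - t)^2 + ε^2 ≠ 0 := fun t => by positivity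
    have := intervalIntegral.integral_mul_deriv_eq_deriv_mul_of_hasDeriv_right
      (a := 0) (b := 1) (u := ρ) (v := G ε) (u' := ρ')
      (v' := fun t => -((x - t) / ((x - t)^2 + ε^2)))
      (by rw [h01]; exact hρc) (hGc ε hε).continuousOn
      (by
        intro t ht
        simp only [zero_le_one, inf_of_le_left, sup_of_le_right] at ht
        exact ((hderiv t (Ioo_subset_Icc_self ht)).hasDerivAt
          (Icc_mem_nhds ht.1 ht.2)).hasDerivWithinAt)
      (fun t _ => (hGd ε hε t).hasDerivWithinAt)
      (ContinuousOn.intervalIntegrable (by rw [h01]; exact hderiv_cont))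
      (Continuous.intervalIntegrable (by fun_prop (disch := assumption)) _ _)
    have h2 : ∫ t in (0 : ℝ)..1, (x - t) * ρ t / ((x - t) ^ 2 + ε ^ 2)
        = - ∫ t in (0 : ℝ)..1, ρ t * -((x - t) / ((x - t)^2 + ε^2)) := by
      rw [← intervalIntegral.integral_neg]
      congr 1; ext t; ring
    rw [h2, this]; ring
  -- pointwise limits
  have hlim : ∀ t, t ≠ x → Tendsto (fun ε => G ε t) (nhdsWithin 0 (Ioi 0))
      (nhds (Real.log |1 - t / x|)) := by
    intro t ht
    have hs : x - t ≠ 0 := sub_ne_zero.2 ht.symm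
    have hval : Real.log |1 - t / x| = G 0 t := by
      have : 1 - t / x = (x - t) / x := by field_simp
      simp only [G]
      rw [Real.log_abs, this, Real.log_div hs hx0.ne']
      simp [Real.log_pow]
    rw [hval]
    have : ContinuousAt (fun ε => G ε t) 0 := by
      simp only [G]
      have : (x - t)^2 + (0:ℝ)^2 ≠ 0 := by simpa using hs
      fun_prop (disch := assumption)
    exact this.tendsto.mono_left nhdsWithin_le_nhds
  obtain ⟨C, hC⟩ := isCompact_Icc.exists_bound_of_continuousOn hderiv_cont
  have hI : Tendsto (fun ε => ∫ t in (0:ℝ)..1, ρ' t * G ε t) (nhdsWithin 0 (Ioi 0))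
      (nhds (∫ t in (0 : ℝ)..1, ρ' t * Real.log |1 - t / x|)) := by
    apply intervalIntegral.tendsto_integral_filter_of_dominated_convergence
      (fun t => C * (Real.log 2 + |Real.log (x - t)| + |Real.log x|))
    · filter_upwards [self_mem_nhdsWithin] with ε hε
      have : IntervalIntegrable (fun t => ρ' t * G ε t) volume 0 1 :=
        ContinuousOn.intervalIntegrable (by
          rw [h01]; exact hderiv_cont.mul (hGc ε hε).continuousOn)
      exact this.def'.aestronglyMeasurable
    · have h1 : Iio (1:ℝ) ∈ nhdsWithin (0:ℝ) (Ioi 0) :=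
        mem_nhdsWithin_of_mem_nhds (Iio_mem_nhds one_pos)
      filter_upwards [self_mem_nhdsWithin, h1] with ε hε hε1
      have hε : 0 < ε := hε
      have hε1 : ε < 1 := hε1
      have hae : ∀ᵐ t : ℝ, t ≠ x := by simp [ae_iff]
      filter_upwards [hae] with t htx ht
      rw [uIoc_of_le zero_le_one] at ht
      have hs : x - t ≠ 0 := sub_ne_zero.2 htx.symm
      have hs2 : 0 < (x - t)^2 := by positivity
      rw [norm_mul]
      have hCt := hC t (Ioc_subset_Icc_self ht)
      refine mul_le_mul hCt ?_ (norm_nonneg _) ((norm_nonneg _).trans hCt)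
      have hl : Real.log ((x - t)^2) ≤ Real.log ((x - t)^2 + ε^2) :=
        Real.log_le_log hs2 (by nlinarith)
      have hu : Real.log ((x - t)^2 + ε^2) ≤ Real.log 2 :=
        Real.log_le_log (by positivity) (by nlinarith [ht.1, ht.2])
      rw [Real.log_pow] at hl
      push_cast at hl
      have h2 : 0 < Real.log 2 := Real.log_pos (by norm_num)
      simp only [G, Real.norm_eq_abs]
      rw [abs_le]
      have := neg_abs_le (Real.log (x - t))
      have := le_abs_self (Real.log x)
      have := neg_abs_le (Real.log x)
      have := abs_nonneg (Real.log (x - t))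
      constructor <;> linarith
    · have : IntervalIntegrable (fun t => Real.log (x - t)) volume 0 1 := by
        have := (intervalIntegral.intervalIntegrable_log' (a := x - 0) (b := x - 1)).comp_sub_left x
        simpa using this
      exact (((intervalIntegrable_const).add this.abs).add intervalIntegrable_const).const_mul C
    · have hae : ∀ᵐ t : ℝ, t ≠ x := by simp [ae_iff]
      filter_upwards [hae] with t htx ht
      exact (hlim t htx).const_mul _
  have hfin := (hI.sub (((hlim 1 hx1.ne').const_mul (ρ 1)).sub
    ((hlim 0 hx0.ne).const_mul (ρ 0)))).const_mul 2
  have e : (∫ t in (0 : ℝ)..1, ρ' t * Real.log |1 - t / x|) + ρ 1 * Real.log (x / (1 - x))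
     = (∫ t in (0 : ℝ)..1, ρ' t * Real.log |1 - t / x|) -
      (ρ 1 * Real.log |1 - 1 / x| - ρ 0 * Real.log |1 - 0 / x|) := by
    have h3 : Real.log |1 - 1 / x| = - Real.log (x / (1 - x)) := by
      rw [← Real.log_inv, Real.log_abs, ← Real.log_neg_eq_log]
      congr 1
      have : 1 - x ≠ 0 := by linarith
      field_simp
      ring
    rw [h3]; simp
  rw [e]
  refine hfin.congr' ?_
  filter_upwards [self_mem_nhdsWithin] with ε hε
  rw [hibp ε hε]
end

section
/- Let 0 ≤ a < b be real numbers and let ρ : [a,b] → ℝ be a nonnegative function of class C¹ on [a,b]. Then for every x in the open interval (a,b) with x > 0, the reducer of ρ satisfies φ(x) = 2·[∫ₐᵇ ρ'(t)·ln|1 − t/x| dt + ρ(b)·ln(x/(b−x)) + ρ(a)·ln((x−a)/x)]. -/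
open MeasureTheory Filter Set

/-- For `0 ≤ a < b`, a nonnegative density `ρ` of class `C¹` on `[a,b]` (with derivative
`ρ'`) and every `x ∈ (a,b)` with `x > 0`, the reducer satisfies
`φ(x) = 2·[∫ₐᵇ ρ'(t)·ln|1 − t/x| dt + ρ(b)·ln(x/(b−x)) + ρ(a)·ln((x−a)/x)]`. -/
theorem reducer_of_C1_general (a b : ℝ) (ha : 0 ≤ a) (hab : a < b)
    (ρ ρ' : ℝ → ℝ)
    (hderiv : ∀ t ∈ Icc a b, HasDerivWithinAt ρ (ρ' t) (Icc a b) t)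
    (hderiv_cont : ContinuousOn ρ' (Icc a b))
    (hnonneg : ∀ t ∈ Icc a b, 0 ≤ ρ t)
    (x : ℝ) (hx : x ∈ Ioo a b) (hxpos : 0 < x) :
    Tendsto
      (fun ε : ℝ => 2 * ∫ t in a..b, (x - t) * ρ t / ((x - t) ^ 2 + ε ^ 2))
      (nhdsWithin 0 (Ioi 0))
      (nhds (2 * ((∫ t in a..b, ρ' t * Real.log |1 - t / x|) +
        ρ b * Real.log (x / (b - x)) + ρ a * Real.log ((x - a) / x)))) := by
  have hint0 : ∀ t ∈ uIcc a b, HasDerivWithinAt ρ (ρ' t) (uIcc a b) t := by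
    rwa [uIcc_of_le hab.le]
  have hc : ContinuousOn ρ' (uIcc a b) := by rwa [uIcc_of_le hab.le]
  have hρi : IntervalIntegrable ρ' volume a b := hc.intervalIntegrable
  have hFTC : ∫ t in a..b, ρ' t = ρ b - ρ a :=
    intervalIntegral.integral_eq_sub_of_hasDerivAt_of_le hab.le
      (fun t ht => (hderiv t ht).continuousWithinAt)
      (fun t ht => (hderiv t (Ioo_subset_Icc_self ht)).hasDerivAt (Icc_mem_nhds ht.1 ht.2)) hρi
  have hlogi : IntervalIntegrable (fun t => Real.log (x - t)) volume a b := by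
    have h := (intervalIntegral.intervalIntegrable_log' (a := x - a) (b := x - b)).comp_sub_left x
    simpa using h
  -- integration by parts
  have hparts : ∀ ε : ℝ, 0 < ε →
      ∫ t in a..b, (x - t) * ρ t / ((x - t) ^ 2 + ε ^ 2) =
        ρ b * (-(1 / 2) * Real.log ((x - b) ^ 2 + ε ^ 2))
        - ρ a * (-(1 / 2) * Real.log ((x - a) ^ 2 + ε ^ 2))
        - ∫ t in a..b, ρ' t * (-(1 / 2) * Real.log ((x - t) ^ 2 + ε ^ 2)) := by
    intro ε hε
    have hpos : ∀ t : ℝ, (x - t) ^ 2 + ε ^ 2 ≠ 0 := fun t => by positivity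
    have hV : ∀ t : ℝ, HasDerivAt (fun t => -(1 / 2) * Real.log ((x - t) ^ 2 + ε ^ 2))
        ((x - t) / ((x - t) ^ 2 + ε ^ 2)) t := by
      intro t
      have h1 : HasDerivAt (fun t : ℝ => (x - t) ^ 2 + ε ^ 2) (-2 * (x - t)) t := by
        have := (((hasDerivAt_id t).const_sub x).pow 2).add_const (ε ^ 2)
        exact this.congr_deriv (by simp)
      have h2 := (h1.log (hpos t)).const_mul (-(1 / 2))
      exact h2.congr_deriv (by ring)
    have hVc : Continuous (fun t : ℝ => (x - t) / ((x - t) ^ 2 + ε ^ 2)) := by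
      fun_prop (disch := exact hpos _)
    rw [← intervalIntegral.integral_mul_deriv_eq_deriv_mul_of_hasDerivWithinAt hint0
      (fun t _ => (hV t).hasDerivWithinAt) hρi (hVc.intervalIntegrable _ _)]
    congr 1
    ext t
    ring
  have hlim : ∀ t : ℝ, t ≠ x → Tendsto
      (fun ε : ℝ => -(1 / 2) * Real.log ((x - t) ^ 2 + ε ^ 2)) (nhdsWithin 0 (Ioi 0))
      (nhds (- Real.log (x - t))) := by
    intro t ht
    have hne : (x - t) ^ 2 + (0 : ℝ) ^ 2 ≠ 0 := by
      have : x - t ≠ 0 := sub_ne_zero.mpr (Ne.symm ht)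
      positivity
    have h : ContinuousAt (fun ε : ℝ => -(1 / 2) * Real.log ((x - t) ^ 2 + ε ^ 2)) 0 := by
      refine continuousAt_const.mul (ContinuousAt.log (by fun_prop) hne)
    have h2 := h.tendsto.mono_left (nhdsWithin_le_nhds (s := Ioi (0 : ℝ)))
    convert h2 using 2
    rw [zero_pow two_ne_zero, add_zero, Real.log_pow]
    push_cast
    ring
  have hdom : Tendsto
      (fun ε : ℝ => ∫ t in a..b, ρ' t * (-(1 / 2) * Real.log ((x - t) ^ 2 + ε ^ 2)))
      (nhdsWithin 0 (Ioi 0)) (nhds (∫ t in a..b, ρ' t * (- Real.log (x - t)))) := by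
    have hne : ∀ᵐ t : ℝ, t ≠ x := by simp [ae_iff]
    have hc1 : Continuous (fun t : ℝ => Real.log ((x - t) ^ 2 + 1)) := by
      apply Continuous.log (by fun_prop)
      intro t
      positivity
    apply intervalIntegral.tendsto_integral_filter_of_dominated_convergence
      (fun t => ‖ρ' t‖ * (‖Real.log (x - t)‖ + Real.log ((x - t) ^ 2 + 1)))
    · filter_upwards [self_mem_nhdsWithin] with ε hε
      have hε : 0 < ε := hε
      refine ((intervalIntegrable_iff.mp hρi).aestronglyMeasurable).mul (Continuous.aestronglyMeasurable ?_)
      refine continuous_const.mul (Continuous.log (by fun_prop) ?_)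
      intro t
      positivity
    · filter_upwards [Ioo_mem_nhdsGT (zero_lt_one' ℝ)] with ε hε
      filter_upwards [hne] with t ht _
      rw [norm_mul]
      refine mul_le_mul_of_nonneg_left ?_ (norm_nonneg _)
      have hxt : x - t ≠ 0 := sub_ne_zero.mpr (Ne.symm ht)
      have hp : 0 < (x - t) ^ 2 := by positivity
      have h1 : Real.log ((x - t) ^ 2) ≤ Real.log ((x - t) ^ 2 + ε ^ 2) :=
        Real.log_le_log hp (by nlinarith [sq_nonneg ε])
      have h2 : Real.log ((x - t) ^ 2 + ε ^ 2) ≤ Real.log ((x - t) ^ 2 + 1) :=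
        Real.log_le_log (by positivity) (by nlinarith [hε.1, hε.2])
      have h3 : 0 ≤ Real.log ((x - t) ^ 2 + 1) := Real.log_nonneg (by linarith)
      rw [Real.log_pow] at h1
      push_cast at h1
      rw [Real.norm_eq_abs, Real.norm_eq_abs, abs_le]
      have h4 := neg_abs_le (Real.log (x - t))
      have h5 := abs_nonneg (Real.log (x - t))
      constructor <;> linarith
    · exact (hlogi.norm.add (hc1.intervalIntegrable _ _)).continuousOn_mul hc.norm
    · filter_upwards [hne] with t ht _
      exact (hlim t ht).const_mul _
  have hfin : (∫ t in a..b, ρ' t * Real.log |1 - t / x|) =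
      -(∫ t in a..b, ρ' t * (- Real.log (x - t))) - (ρ b - ρ a) * Real.log x := by
    have hi1 : IntervalIntegrable (fun t => -(ρ' t * (- Real.log (x - t)))) volume a b :=
      (hlogi.neg.continuousOn_mul hc).neg
    rw [← hFTC, ← intervalIntegral.integral_mul_const, ← intervalIntegral.integral_neg,
      ← intervalIntegral.integral_sub hi1 (hρi.mul_const _)]
    apply intervalIntegral.integral_congr_ae
    have hne : ∀ᵐ t : ℝ, t ≠ x := by simp [ae_iff]
    filter_upwards [hne] with t ht _
    have hxt : x - t ≠ 0 := sub_ne_zero.mpr (Ne.symm ht)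
    have : 1 - t / x = (x - t) / x := by field_simp
    rw [Real.log_abs, this, Real.log_div hxt hxpos.ne']
    ring
  have hb : 0 < b - x := sub_pos.mpr hx.2
  have haa : 0 < x - a := sub_pos.mpr hx.1
  have key := ((((hlim b hx.2.ne').const_mul (ρ b)).sub
    ((hlim a hx.1.ne).const_mul (ρ a))).sub hdom).const_mul 2
  have hval : 2 * ((∫ t in a..b, ρ' t * Real.log |1 - t / x|) +
        ρ b * Real.log (x / (b - x)) + ρ a * Real.log ((x - a) / x)) =
      2 * (ρ b * -Real.log (x - b) - ρ a * -Real.log (x - a)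
        - ∫ t in a..b, ρ' t * (- Real.log (x - t))) := by
    rw [hfin, Real.log_div hxpos.ne' hb.ne', Real.log_div haa.ne' hxpos.ne',
      ← Real.log_neg_eq_log (x - b), neg_sub]
    ring
  rw [hval]
  refine key.congr' ?_
  filter_upwards [self_mem_nhdsWithin] with ε hε
  rw [hparts ε hε]
end

section
/- For the density ρ(x) = ln(1 + 1/√x) on (0,1), the reducer satisfies, for every x in (0,1): lim_{ε→0⁺} 2∫₀¹ (x−t)·ln(1+1/√t)/((x−t)²+ε²) dt = −2·ln(1/√x + 1)·ln(1/√x − 1). -/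
open MeasureTheory Filter Set

noncomputable section

abbrev muI : Measure ℝ := volume.restrict (Ioo (0 : ℝ) 1)

lemma int_inv_real (u : ℝ) (hu : 0 < u) :
    ∫ a, (a + u)⁻¹ ∂muI = Real.log (1 + 1 / u) := by
  rw [← integral_Ioc_eq_integral_Ioo, ← intervalIntegral.integral_of_le zero_le_one,
    intervalIntegral.integral_comp_add_right (fun y => y⁻¹), integral_inv_of_pos (by linarith) (by linarith)]
  congr 1
  field_simp
  ring

lemma integrable_inv_slice (u : ℝ) (hu : 0 < u) :
    Integrable (fun a : ℝ => (a + u)⁻¹) muI := by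
  have : ContinuousOn (fun a : ℝ => (a + u)⁻¹) (Icc 0 1) := by
    apply ContinuousOn.inv₀ (by fun_prop)
    intro a ha
    have := ha.1
    positivity
  exact (this.integrableOn_Icc).mono_set Ioo_subset_Icc_self

lemma integrable_rho : Integrable (fun u : ℝ => Real.log (1 + 1 / u)) muI := by
  have h1 : IntegrableOn (fun u : ℝ => Real.log (1 + u)) (Ioo 0 1) := by
    have : ContinuousOn (fun a : ℝ => Real.log (1 + a)) (Icc 0 1) := by
      apply ContinuousOn.log (by fun_prop)
      intro a ha
      have := ha.1
      positivity
    exact (this.integrableOn_Icc).mono_set Ioo_subset_Icc_self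
  have h2 : IntegrableOn (fun u : ℝ => Real.log u) (Ioo 0 1) := by
    have := (intervalIntegral.intervalIntegrable_log' (a := 0) (b := 1))
    rw [intervalIntegrable_iff_integrableOn_Ioo_of_le zero_le_one] at this
    exact this
  refine (h1.sub h2).congr ?_
  filter_upwards [ae_restrict_mem measurableSet_Ioo] with u hu
  have h0 := hu.1
  simp only [Pi.sub_apply]
  rw [← Real.log_div (by positivity) (by positivity)]
  congr 1
  field_simp
  ring

lemma ae_pos : ∀ᵐ p ∂(muI.prod muI), p ∈ Ioo (0:ℝ) 1 ×ˢ Ioo (0:ℝ) 1 := by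
  rw [Measure.prod_restrict]
  exact ae_restrict_mem (measurableSet_Ioo.prod measurableSet_Ioo)

lemma integrable_k : Integrable (fun p : ℝ × ℝ => (((p.2 + p.1)⁻¹ : ℝ) : ℂ)) (muI.prod muI) := by
  suffices H : Integrable (fun p : ℝ × ℝ => (p.2 + p.1)⁻¹) (muI.prod muI) from H.ofReal
  rw [integrable_prod_iff (by apply Measurable.aestronglyMeasurable; fun_prop)]
  constructor
  · filter_upwards [ae_restrict_mem measurableSet_Ioo] with u hu
    exact integrable_inv_slice u hu.1
  · refine integrable_rho.congr ?_
    filter_upwards [ae_restrict_mem measurableSet_Ioo] with u hu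
    rw [← int_inv_real u hu.1]
    apply integral_congr_ae
    filter_upwards [ae_restrict_mem measurableSet_Ioo] with a ha
    have := ha.1
    have := hu.1
    rw [Real.norm_of_nonneg (by positivity)]

lemma im_sub_ne {w : ℂ} (hw : 0 < w.im) (u : ℝ) : w - u ≠ 0 := by
  intro h
  have := congrArg Complex.im h
  simp at this
  linarith

lemma im_add_ne {w : ℂ} (hw : 0 < w.im) (u : ℝ) : w + u ≠ 0 := by
  intro h
  have := congrArg Complex.im h
  simp at this
  linarith

lemma norm_inv_le {w v : ℂ} (hw : 0 < w.im) (h : v.im = w.im) : ‖v⁻¹‖ ≤ (w.im)⁻¹ := by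
  rw [norm_inv]
  apply inv_anti₀ hw
  rw [← h]
  exact (le_abs_self _).trans (Complex.abs_im_le_norm v)

lemma integrable_F1 {w : ℂ} (hw : 0 < w.im) :
    Integrable (fun p : ℝ × ℝ => (((p.2 + p.1)⁻¹ : ℝ) : ℂ) * (w - p.1)⁻¹) (muI.prod muI) := by
  apply integrable_k.mul_bdd (c := (w.im)⁻¹)
  · apply Measurable.aestronglyMeasurable; fun_prop
  · exact Eventually.of_forall fun p => norm_inv_le hw (by simp)

lemma integrable_F2 {w : ℂ} (hw : 0 < w.im) :
    Integrable (fun p : ℝ × ℝ => (((p.2 + p.1)⁻¹ : ℝ) : ℂ) * (w + p.1)⁻¹) (muI.prod muI) := by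
  apply integrable_k.mul_bdd (c := (w.im)⁻¹)
  · apply Measurable.aestronglyMeasurable; fun_prop
  · exact Eventually.of_forall fun p => norm_inv_le hw (by simp)

lemma int_slice (u : ℝ) (hu : 0 < u) (c : ℂ) :
    ∫ a, (((a + u)⁻¹ : ℝ) : ℂ) * c ∂muI = (Real.log (1 + 1 / u) : ℂ) * c := by
  rw [integral_mul_const, ← int_inv_real u hu]
  congr 1
  exact integral_ofReal

lemma integrable_G {w : ℂ} (hw : 0 < w.im) :
    Integrable (fun u : ℝ => (Real.log (1 + 1 / u) : ℂ) * ((w - u)⁻¹ - (w + u)⁻¹)) muI := by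
  refine ((integrable_F1 hw).sub (integrable_F2 hw)).integral_prod_left.congr ?_
  filter_upwards [ae_restrict_mem measurableSet_Ioo] with u hu
  simp only [Pi.sub_apply, ← mul_sub]
  exact int_slice u hu.1 _

lemma integral_G {w : ℂ} (hw : 0 < w.im) :
    ∫ u : ℝ, (Real.log (1 + 1 / u) : ℂ) * ((w - u)⁻¹ - (w + u)⁻¹) ∂muI
      = (∫ u : ℝ, (w - u)⁻¹ ∂muI) * ∫ a : ℝ, (w + a)⁻¹ ∂muI := by
  have e1 : ∫ u : ℝ, (Real.log (1 + 1 / u) : ℂ) * ((w - u)⁻¹ - (w + u)⁻¹) ∂muI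
      = ∫ p, (((p.2 + p.1)⁻¹ : ℝ) : ℂ) * (w - p.1)⁻¹ - (((p.2 + p.1)⁻¹ : ℝ) : ℂ) * (w + p.1)⁻¹
          ∂(muI.prod muI) := by
    refine Eq.trans ?_ (integral_prod _ ((integrable_F1 hw).sub (integrable_F2 hw))).symm
    apply integral_congr_ae
    filter_upwards [ae_restrict_mem measurableSet_Ioo] with u hu
    simp only [Pi.sub_apply, ← mul_sub]
    exact (int_slice u hu.1 _).symm
  rw [e1, integral_sub (integrable_F1 hw) (integrable_F2 hw),
    ← integral_prod_swap (fun p : ℝ × ℝ => (((p.2 + p.1)⁻¹ : ℝ) : ℂ) * (w + p.1)⁻¹),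
    ← integral_prod_mul]
  refine (integral_sub (integrable_F1 hw) (integrable_F2 hw).swap).symm.trans ?_
  apply integral_congr_ae
  filter_upwards [ae_pos] with p hp
  obtain ⟨u, a⟩ := p
  have h1 : (0:ℝ) < u := hp.1.1
  have h2 : (0:ℝ) < a := hp.2.1
  have h3 := im_sub_ne hw u
  have h4 := im_add_ne hw a
  have h5 : (a : ℂ) + u ≠ 0 := by exact_mod_cast (by positivity : a + u ≠ 0)
  have h6 : (u : ℂ) + a ≠ 0 := by rwa [add_comm]
  simp only [Function.comp, Prod.swap]
  push_cast
  field_simp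
  ring

lemma int_add {w : ℂ} (hw : 0 < w.im) :
    ∫ a : ℝ, (w + a)⁻¹ ∂muI = Complex.log (w + 1) - Complex.log w := by
  rw [← integral_Ioc_eq_integral_Ioo, ← intervalIntegral.integral_of_le zero_le_one]
  rw [intervalIntegral.integral_eq_sub_of_hasDerivAt (f := fun a : ℝ => Complex.log (w + a))]
  · simp
  · intro a _
    have h : HasDerivAt (fun a : ℝ => w + (a : ℂ)) 1 a := (Complex.ofRealCLM.hasDerivAt).const_add w
    have := h.clog_real (Or.inr (by simp; exact hw.ne'))
    simpa using this
  · apply Continuous.intervalIntegrable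
    exact Continuous.inv₀ (by fun_prop) (im_add_ne hw)

lemma int_sub {w : ℂ} (hw : 0 < w.im) :
    ∫ a : ℝ, (w - a)⁻¹ ∂muI = Complex.log w - Complex.log (w - 1) := by
  rw [← integral_Ioc_eq_integral_Ioo, ← intervalIntegral.integral_of_le zero_le_one]
  rw [intervalIntegral.integral_eq_sub_of_hasDerivAt (f := fun a : ℝ => - Complex.log (w - a))]
  · simp; ring
  · intro a _
    have h : HasDerivAt (fun a : ℝ => w - (a : ℂ)) (-1) a := (Complex.ofRealCLM.hasDerivAt).const_sub w
    have := (h.clog_real (Or.inr (by simp; exact hw.ne'))).fun_neg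
    convert this using 1
    rw [neg_div, neg_neg, one_div]
  · apply Continuous.intervalIntegrable
    exact Continuous.inv₀ (by fun_prop) (im_sub_ne hw)

lemma image_sq : (fun u : ℝ => u ^ 2) '' Ioo 0 1 = Ioo 0 1 := by
  ext y
  constructor
  · rintro ⟨u, hu, rfl⟩
    exact ⟨by have := hu.1; positivity, by have := hu.1; have := hu.2; simp only; nlinarith⟩
  · intro hy
    exact ⟨√y, ⟨Real.sqrt_pos.2 hy.1, by rw [Real.sqrt_lt' one_pos]; simpa using hy.2⟩, Real.sq_sqrt hy.1.le⟩

lemma subst_sq (g : ℝ → ℝ) : ∫ t in (0:ℝ)..1, g t = ∫ u, 2 * u * g (u ^ 2) ∂muI := by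
  rw [intervalIntegral.integral_of_le zero_le_one, integral_Ioc_eq_integral_Ioo]
  conv_lhs => rw [← image_sq]
  rw [integral_image_eq_integral_abs_deriv_smul (f' := fun u => 2 * u) measurableSet_Ioo]
  · apply setIntegral_congr_fun measurableSet_Ioo
    intro u hu
    have := hu.1
    simp only [smul_eq_mul]
    rw [abs_of_pos (by positivity)]
  · intro u hu
    have := (hasDerivAt_pow 2 u).hasDerivWithinAt (s := Ioo 0 1)
    simpa using this
  · intro a ha b hb h
    exact (sq_eq_sq₀ ha.1.le hb.1.le).1 h

lemma main_formula {w : ℂ} (hw : 0 < w.im) (x ε : ℝ) (h : w ^ 2 = x + ε * Complex.I) (hε : 0 < ε) :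
    ∫ t in (0 : ℝ)..1, (x - t) * Real.log (1 + 1 / Real.sqrt t) / ((x - t) ^ 2 + ε ^ 2)
      = ((Complex.log w - Complex.log (w - 1)) * (Complex.log (w + 1) - Complex.log w)).re := by
  rw [← int_sub hw, ← int_add hw, ← integral_G hw, subst_sq]
  change _ = RCLike.re (∫ u : ℝ, (Real.log (1 + 1 / u) : ℂ) * ((w - u)⁻¹ - (w + u)⁻¹) ∂muI)
  rw [← integral_re (integrable_G hw)]
  apply setIntegral_congr_fun measurableSet_Ioo
  intro u hu
  have h0 := hu.1
  have h3 := im_sub_ne hw u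
  have h4 := im_add_ne hw u
  have hD : (x - u ^ 2) ^ 2 + ε ^ 2 ≠ 0 := by positivity
  have key : (w - u)⁻¹ - (w + u)⁻¹ =
      (((2 * u / ((x - u ^ 2) ^ 2 + ε ^ 2) : ℝ)) : ℂ) * (((x - u ^ 2 : ℝ) : ℂ) - ε * Complex.I) := by
    have e : (w - u)⁻¹ - (w + u)⁻¹ = 2 * u / (((x - u ^ 2 : ℝ) : ℂ) + ε * Complex.I) := by
      have : (((x - u ^ 2 : ℝ) : ℂ) + ε * Complex.I) = (w - u) * (w + u) := by
        push_cast
        linear_combination -h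
      rw [this]
      field_simp
      ring
    have h7 : (((x - u ^ 2 : ℝ) : ℂ) + ε * Complex.I) ≠ 0 := by
      intro h
      have := congrArg Complex.im h
      simp [-Complex.ofReal_sub, -Complex.ofReal_pow] at this
      linarith
    have h8 : ((((x - u ^ 2) ^ 2 + ε ^ 2 : ℝ)) : ℂ) ≠ 0 := by exact_mod_cast hD
    rw [e, Complex.ofReal_div, div_eq_iff h7, div_mul_eq_mul_div, div_mul_eq_mul_div, eq_div_iff h8]
    push_cast
    linear_combination (2 * (u:ℂ) * ε ^ 2) * Complex.I_sq
  simp only [Real.sqrt_sq h0.le]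
  rw [key]
  have e2 : (Real.log (1 + 1 / u) : ℂ) * ((((2 * u / ((x - u ^ 2) ^ 2 + ε ^ 2) : ℝ)) : ℂ) * (((x - u ^ 2 : ℝ) : ℂ) - ε * Complex.I))
     = ((Real.log (1 + 1 / u) * (2 * u / ((x - u ^ 2) ^ 2 + ε ^ 2)) : ℝ) : ℂ) * (((x - u ^ 2 : ℝ) : ℂ) - ε * Complex.I) := by
    rw [Complex.ofReal_mul, mul_assoc]
  rw [e2]
  change _ = Complex.re _
  rw [Complex.re_ofReal_mul, Complex.sub_re, Complex.ofReal_re, Complex.re_ofReal_mul, Complex.I_re]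
  field_simp
  ring

end

/-- For the density `ρ(t) = ln(1 + 1/√t)` on `(0,1)` and every `x ∈ (0,1)`,
`lim_{ε→0⁺} 2∫₀¹ (x−t)·ln(1+1/√t)/((x−t)²+ε²) dt = −2·ln(1/√x + 1)·ln(1/√x − 1)`. -/
theorem reducer_log_inv_sqrt (x : ℝ) (hx : x ∈ Ioo (0 : ℝ) 1) :
    Tendsto
      (fun ε : ℝ =>
        2 * ∫ t in (0 : ℝ)..1,
          (x - t) * Real.log (1 + 1 / Real.sqrt t) / ((x - t) ^ 2 + ε ^ 2))
      (nhdsWithin 0 (Ioi 0))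
      (nhds (-2 * Real.log (1 / Real.sqrt x + 1) * Real.log (1 / Real.sqrt x - 1))) := by
  obtain ⟨hx0, hx1⟩ := hx
  set s := Real.sqrt x with hs
  have hs0 : 0 < s := Real.sqrt_pos.2 hx0
  have hs1 : s < 1 := by rw [hs, Real.sqrt_lt' one_pos]; simpa using hx1
  let z : ℝ → ℂ := fun ε => x + ε * Complex.I
  let w : ℝ → ℂ := fun ε => Complex.exp (Complex.log (z ε) / 2)
  have hz0 : z 0 = x := by simp [z]
  have hw0 : w 0 = s := by
    simp only [w, hz0]
    have e : s = Real.exp (Real.log x / 2) := by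
      rw [← Real.log_sqrt hx0.le, Real.exp_log hs0]
    rw [← Complex.ofReal_log hx0.le, e]
    push_cast
    rfl
  have hcont : ContinuousAt w 0 := by
    have : ContinuousAt z 0 := by simp only [z]; fun_prop
    have h2 : ContinuousAt (fun ε => Complex.log (z ε)) 0 := by
      apply this.clog
      rw [hz0]
      exact Complex.ofReal_mem_slitPlane.2 hx0
    exact (h2.div_const 2).cexp
  have hwt : Tendsto w (nhdsWithin 0 (Ioi 0)) (nhds (s : ℂ)) := by
    have := hcont.tendsto
    rw [hw0] at this
    exact this.mono_left nhdsWithin_le_nhds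
  have hsq : ∀ ε : ℝ, 0 < ε → w ε ^ 2 = x + ε * Complex.I := by
    intro ε hε
    simp only [w]
    rw [← Complex.exp_nat_mul]
    push_cast
    rw [mul_div_cancel₀ _ (two_ne_zero), Complex.exp_log]
    intro h
    have := congrArg Complex.im h
    simp [z] at this
    linarith
  have hre : ∀ᶠ ε in nhdsWithin (0:ℝ) (Ioi 0), 0 < (w ε).re := by
    have := (Complex.continuous_re.tendsto _).comp hwt
    exact this.eventually (lt_mem_nhds (by simpa using hs0))
  have him : ∀ᶠ ε in nhdsWithin (0:ℝ) (Ioi 0), 0 < (w ε).im := by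
    filter_upwards [hre, self_mem_nhdsWithin] with ε h1 h2
    have h3 := congrArg Complex.im (hsq ε h2)
    have h2' : (0:ℝ) < ε := h2
    simp [pow_two] at h3
    by_contra hc
    nlinarith
  have hlog1 : Tendsto (fun ε => Complex.log (w ε)) (nhdsWithin 0 (Ioi 0)) (nhds (Real.log s : ℂ)) := by
    rw [Complex.ofReal_log hs0.le]
    exact hwt.clog (Complex.ofReal_mem_slitPlane.2 hs0)
  have hlog2 : Tendsto (fun ε => Complex.log (w ε + 1)) (nhdsWithin 0 (Ioi 0))
      (nhds (Real.log (s + 1) : ℂ)) := by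
    rw [Complex.ofReal_log (by linarith)]
    push_cast
    apply (hwt.add_const 1).clog
    exact_mod_cast Complex.ofReal_mem_slitPlane.2 (by linarith : 0 < s + 1)
  have hlog3 : Tendsto (fun ε => Complex.log (w ε - 1)) (nhdsWithin 0 (Ioi 0))
      (nhds ((Real.log (1 - s) : ℂ) + Real.pi * Complex.I)) := by
    have := Complex.tendsto_log_nhdsWithin_im_nonneg_of_re_neg_of_im_zero (z := (s:ℂ) - 1)
      (by simp; linarith) (by simp)
    have h4 : ‖(s:ℂ) - 1‖ = 1 - s := by
      rw [← Complex.ofReal_one, ← Complex.ofReal_sub, Complex.norm_real, Real.norm_eq_abs,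
        abs_of_neg (by linarith)]
      ring
    rw [h4] at this
    refine this.comp (tendsto_nhdsWithin_iff.2 ⟨hwt.sub_const 1, ?_⟩)
    filter_upwards [him] with ε h
    simpa using h.le
  have hfin := ((Complex.continuous_re.tendsto _).comp ((hlog1.sub hlog3).mul (hlog2.sub hlog1))).const_mul 2
  have hval : 2 * (((Real.log s : ℂ) - ((Real.log (1 - s) : ℂ) + Real.pi * Complex.I)) *
      ((Real.log (s + 1) : ℂ) - Real.log s)).re =
      -2 * Real.log (1 / s + 1) * Real.log (1 / s - 1) := by
    have a1 : Real.log (1 / s + 1) = Real.log (s + 1) - Real.log s := by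
      rw [← Real.log_div (by linarith) hs0.ne']
      congr 1
      field_simp
      ring
    have a2 : Real.log (1 / s - 1) = Real.log (1 - s) - Real.log s := by
      rw [← Real.log_div (by linarith) hs0.ne']
      congr 1
      field_simp
    rw [a1, a2, ← Complex.ofReal_sub, mul_comm (_ - _ : ℂ), Complex.re_ofReal_mul]
    simp only [Complex.sub_re, Complex.add_re, Complex.ofReal_re, Complex.re_ofReal_mul, Complex.I_re]
    ring
  rw [hval] at hfin
  refine hfin.congr' ?_
  filter_upwards [him, self_mem_nhdsWithin] with ε h1 h2
  rw [main_formula h1 x ε (hsq ε h2) h2]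
  rfl
end

section
/- For the density ρ(x) = (2/π)·arccos(1−2x) on (0,1), the reducer satisfies, for every x in (0,1): lim_{ε→0⁺} 2∫₀¹ (x−t)·(2/π)·arccos(1−2t)/((x−t)²+ε²) dt = −4·ln(4−4x). -/
open MeasureTheory Filter Set

lemma aux_F_int (a b : ℝ) :
    IntervalIntegrable (fun u : ℝ => Real.log (Real.sin (u / 2))) volume a b := by
  have := (intervalIntegrable_log_sin (a := a / 2) (b := b / 2)).comp_mul_left (c := (1 / 2 : ℝ))
  refine (IntervalIntegrable.congr ?_ (this.mono_set ?_))
  · intro u _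
    simp only [Function.comp]
    congr 2; ring
  · apply le_of_eq; congr 1 <;> ring

lemma aux_sum (α : ℝ) :
    (∫ θ in (0 : ℝ)..Real.pi, Real.log (Real.sin ((θ + α) / 2)))
      + (∫ θ in (0 : ℝ)..Real.pi, Real.log (Real.sin ((θ - α) / 2)))
      = -2 * Real.log 2 * Real.pi := by
  have h1 := intervalIntegral.integral_comp_add_right (a := 0) (b := Real.pi)
    (fun u : ℝ => Real.log (Real.sin (u / 2))) α
  have h2 : (∫ θ in (0 : ℝ)..Real.pi, Real.log (Real.sin ((θ - α) / 2)))
      = ∫ u in (α - Real.pi)..(α - 0), Real.log (Real.sin (u / 2)) := by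
    rw [← intervalIntegral.integral_comp_sub_left (a := 0) (b := Real.pi)
      (fun u : ℝ => Real.log (Real.sin (u / 2))) α]
    congr 1; ext θ
    rw [← Real.log_neg_eq_log, ← Real.sin_neg]
    congr 2; ring
  rw [h1, h2, add_comm, sub_zero, zero_add,
    intervalIntegral.integral_add_adjacent_intervals (aux_F_int _ _) (aux_F_int _ _),
    intervalIntegral.integral_comp_div (fun u => Real.log (Real.sin u)) (by norm_num : (2:ℝ) ≠ 0)]
  have hp : Function.Periodic (fun u => Real.log (Real.sin u)) Real.pi := by
    intro u
    simp [Real.sin_add_pi, Real.log_neg_eq_log]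
  have := hp.intervalIntegral_add_eq ((α - Real.pi) / 2) 0
  rw [show (Real.pi + α) / 2 = (α - Real.pi) / 2 + Real.pi by ring, this, zero_add,
    integral_log_sin_zero_pi]
  simp; ring

lemma aux_ne {α θ : ℝ} (hα : α ∈ Ioo 0 Real.pi) (hθ : θ ∈ Ioc 0 Real.pi) (h : θ ≠ α) :
    Real.cos θ - Real.cos α ≠ 0 := by
  intro h0
  apply h
  exact Real.injOn_cos ⟨hθ.1.le, hθ.2⟩ ⟨hα.1.le, hα.2.le⟩ (by linarith)

lemma aux_ae (α : ℝ) : ∀ᵐ θ : ℝ ∂volume, θ ≠ α := by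
  have := (Set.countable_singleton α).ae_notMem (volume : Measure ℝ)
  simpa using this

lemma aux_int_s6 (α : ℝ) :
    IntervalIntegrable (fun θ => Real.log (((Real.cos θ - Real.cos α) / 2) ^ 2)) volume 0 Real.pi := by
  have : MeromorphicOn (fun θ => ((Real.cos θ - Real.cos α) / 2) ^ 2) (uIcc 0 Real.pi) := by
    apply AnalyticOnNhd.meromorphicOn
    intro θ _
    fun_prop
  exact this.intervalIntegrable_log

lemma aux_val_s6 {α : ℝ} (hα : α ∈ Ioo 0 Real.pi) :
    ∫ θ in (0 : ℝ)..Real.pi, Real.log (((Real.cos θ - Real.cos α) / 2) ^ 2)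
      = -4 * Real.log 2 * Real.pi := by
  have i1 : IntervalIntegrable (fun θ => Real.log (Real.sin ((θ + α) / 2))) volume 0 Real.pi := by
    simpa using (aux_F_int (0 + α) (Real.pi + α)).comp_add_right α
  have i2 : IntervalIntegrable (fun θ => Real.log (Real.sin ((θ - α) / 2))) volume 0 Real.pi := by
    simpa using (aux_F_int (0 - α) (Real.pi - α)).comp_sub_right α
  have : ∫ θ in (0 : ℝ)..Real.pi, Real.log (((Real.cos θ - Real.cos α) / 2) ^ 2)
      = ∫ θ in (0 : ℝ)..Real.pi, 2 * (Real.log (Real.sin ((θ + α) / 2))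
        + Real.log (Real.sin ((θ - α) / 2))) := by
    apply intervalIntegral.integral_congr_ae
    filter_upwards [aux_ae α] with θ h hθ
    rw [uIoc_of_le Real.pi_pos.le] at hθ
    have hne := aux_ne hα hθ h
    rw [Real.cos_sub_cos] at hne ⊢
    have h1 : Real.sin ((θ + α) / 2) ≠ 0 := by
      intro h0; simp [h0] at hne
    have h2 : Real.sin ((θ - α) / 2) ≠ 0 := by
      intro h0; simp [h0] at hne
    rw [← Real.log_mul h1 h2, Real.log_pow, ← Real.log_neg_eq_log (_ / 2)]
    push_cast
    congr 2; ring
  rw [this, intervalIntegral.integral_const_mul, intervalIntegral.integral_add i1 i2, aux_sum]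
  ring

lemma aux_lim {α : ℝ} (hα : α ∈ Ioo 0 Real.pi) :
    Tendsto (fun ε : ℝ => ∫ θ in (0 : ℝ)..Real.pi,
      Real.log (((Real.cos θ - Real.cos α) / 2) ^ 2 + ε ^ 2)) (nhdsWithin 0 (Ioi 0))
      (nhds (-4 * Real.log 2 * Real.pi)) := by
  rw [← aux_val_s6 hα]
  apply intervalIntegral.tendsto_integral_filter_of_dominated_convergence
    (fun θ => |Real.log (((Real.cos θ - Real.cos α) / 2) ^ 2)| + Real.log 2)
  · filter_upwards [self_mem_nhdsWithin] with ε hε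
    apply Measurable.aestronglyMeasurable
    fun_prop
  · have : ∀ᶠ ε : ℝ in nhdsWithin 0 (Ioi 0), ε ∈ Ioo (0:ℝ) 1 := Ioo_mem_nhdsGT one_pos
    filter_upwards [this] with ε hε
    filter_upwards [aux_ae α] with θ h hθ
    rw [uIoc_of_le Real.pi_pos.le] at hθ
    have hne := aux_ne hα hθ h
    have hpos : 0 < ((Real.cos θ - Real.cos α) / 2) ^ 2 := by positivity
    have hle : ((Real.cos θ - Real.cos α) / 2) ^ 2 ≤ 1 := by
      rw [sq_le_one_iff_abs_le_one, abs_le]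
      constructor <;> linarith [Real.cos_le_one θ, Real.cos_le_one α, Real.neg_one_le_cos θ,
        Real.neg_one_le_cos α]
    have he : ε ^ 2 ≤ 1 := by nlinarith [hε.1, hε.2]
    have l1 := Real.log_le_log hpos (by nlinarith [sq_nonneg ε] :
      ((Real.cos θ - Real.cos α) / 2) ^ 2 ≤ ((Real.cos θ - Real.cos α) / 2) ^ 2 + ε ^ 2)
    have l2 := Real.log_le_log (by positivity) (by linarith :
      ((Real.cos θ - Real.cos α) / 2) ^ 2 + ε ^ 2 ≤ 2)
    have l3 := Real.log_nonneg (by norm_num : (1:ℝ) ≤ 2)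
    rw [Real.norm_eq_abs, abs_le]
    constructor
    · linarith [neg_abs_le (Real.log (((Real.cos θ - Real.cos α) / 2) ^ 2))]
    · linarith [abs_nonneg (Real.log (((Real.cos θ - Real.cos α) / 2) ^ 2))]
  · exact (aux_int_s6 α).abs.add intervalIntegrable_const
  · filter_upwards [aux_ae α] with θ h hθ
    rw [uIoc_of_le Real.pi_pos.le] at hθ
    have hne := aux_ne hα hθ h
    have hpos : 0 < ((Real.cos θ - Real.cos α) / 2) ^ 2 := by positivity
    apply Tendsto.log _ hpos.ne'
    have : Continuous (fun ε : ℝ => ((Real.cos θ - Real.cos α) / 2) ^ 2 + ε ^ 2) := by fun_prop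
    have := (this.tendsto 0).mono_left (nhdsWithin_le_nhds (s := Ioi 0))
    simpa using this

lemma aux_eq (α : ℝ) {ε : ℝ} (hε : 0 < ε) :
    2 * ∫ t in (0 : ℝ)..1, ((1 - Real.cos α) / 2 - t) * ((2 / Real.pi) * Real.arccos (1 - 2 * t))
        / (((1 - Real.cos α) / 2 - t) ^ 2 + ε ^ 2)
      = (2 / Real.pi) * ((∫ θ in (0 : ℝ)..Real.pi,
          Real.log (((Real.cos θ - Real.cos α) / 2) ^ 2 + ε ^ 2))
        - Real.pi * Real.log (((-1 - Real.cos α) / 2) ^ 2 + ε ^ 2)) := by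
  have hpos : ∀ y : ℝ, y ^ 2 + ε ^ 2 ≠ 0 := fun y => by positivity
  have s1 := intervalIntegral.integral_comp_mul_deriv (a := 0) (b := Real.pi)
    (f := fun θ => (1 - Real.cos θ) / 2) (f' := fun θ => Real.sin θ / 2)
    (g := fun t => ((1 - Real.cos α) / 2 - t) * ((2 / Real.pi) * Real.arccos (1 - 2 * t))
        / (((1 - Real.cos α) / 2 - t) ^ 2 + ε ^ 2))
    (fun θ _ => by
      have := ((Real.hasDerivAt_cos θ).const_sub 1).div_const 2
      simpa using this)
    (by fun_prop)
    (by
      apply Continuous.div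
      · have := Real.continuous_arccos
        fun_prop
      · fun_prop
      · intro t; exact hpos _)
  simp only [Real.cos_zero, Real.cos_pi, sub_self, zero_div] at s1
  rw [show (1 - -1 : ℝ) / 2 = 1 by norm_num] at s1
  rw [← s1]
  have hd : ∀ θ : ℝ, HasDerivAt
      (fun θ => Real.log (((Real.cos θ - Real.cos α) / 2) ^ 2 + ε ^ 2))
      (-((Real.cos θ - Real.cos α) / 2 * Real.sin θ)
        / (((Real.cos θ - Real.cos α) / 2) ^ 2 + ε ^ 2)) θ := by
    intro θ
    have := (((((Real.hasDerivAt_cos θ).sub_const (Real.cos α)).div_const 2).pow 2).add_const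
      (ε ^ 2)).log (hpos _)
    convert this using 1
    simp only [Pi.pow_apply]
    congr 1
    push_cast
    ring
  have p := intervalIntegral.integral_mul_deriv_eq_deriv_mul (a := 0) (b := Real.pi)
    (u := fun θ => θ) (u' := fun _ => 1)
    (fun θ _ => hasDerivAt_id θ) (fun θ _ => hd θ) intervalIntegrable_const
    (by
      apply Continuous.intervalIntegrable
      apply Continuous.div
      · fun_prop
      · fun_prop
      · intro t; exact hpos _)
  simp only [Real.cos_pi, zero_mul, sub_zero, one_mul] at p
  have q : ∫ θ in (0:ℝ)..Real.pi, ((fun t => ((1 - Real.cos α) / 2 - t) *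
        ((2 / Real.pi) * Real.arccos (1 - 2 * t))
        / (((1 - Real.cos α) / 2 - t) ^ 2 + ε ^ 2)) ∘ fun θ => (1 - Real.cos θ) / 2) θ *
          (Real.sin θ / 2) = ∫ θ in (0:ℝ)..Real.pi, (-1 / Real.pi) *
        (θ * (-((Real.cos θ - Real.cos α) / 2 * Real.sin θ)
        / (((Real.cos θ - Real.cos α) / 2) ^ 2 + ε ^ 2))) := by
    apply intervalIntegral.integral_congr
    intro θ hθ
    rw [uIcc_of_le Real.pi_pos.le] at hθ
    simp only [Function.comp]
    rw [show 1 - 2 * ((1 - Real.cos θ) / 2) = Real.cos θ by ring, Real.arccos_cos hθ.1 hθ.2,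
      show (1 - Real.cos α) / 2 - (1 - Real.cos θ) / 2 = (Real.cos θ - Real.cos α) / 2 by ring]
    ring
  rw [q, intervalIntegral.integral_const_mul, p]
  ring

theorem reducer_arccos (x : ℝ) (hx : x ∈ Ioo (0 : ℝ) 1) :
    Tendsto
      (fun ε : ℝ =>
        2 * ∫ t in (0 : ℝ)..1,
          (x - t) * ((2 / Real.pi) * Real.arccos (1 - 2 * t)) / ((x - t) ^ 2 + ε ^ 2))
      (nhdsWithin 0 (Ioi 0))
      (nhds (-4 * Real.log (4 - 4 * x))) := by
  obtain ⟨hx0, hx1⟩ := hx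
  obtain ⟨α, hα, hc⟩ : ∃ α ∈ Ioo 0 Real.pi, x = (1 - Real.cos α) / 2 := by
    refine ⟨Real.arccos (1 - 2 * x), ⟨Real.arccos_pos.2 (by linarith), ?_⟩, ?_⟩
    · refine lt_of_le_of_ne (Real.arccos_le_pi _) ?_
      rw [Ne, Real.arccos_eq_pi]
      linarith
    · rw [Real.cos_arccos (by linarith) (by linarith)]; ring
  have e : (-1 - Real.cos α) / 2 = -(1 - x) := by rw [hc]; ring
  have hlim2 : Tendsto (fun ε : ℝ => Real.log (((-1 - Real.cos α) / 2) ^ 2 + ε ^ 2))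
      (nhdsWithin 0 (Ioi 0)) (nhds (2 * Real.log (1 - x))) := by
    have hv : 2 * Real.log (1 - x) = Real.log (((-1 - Real.cos α) / 2) ^ 2) := by
      rw [e, neg_sq, Real.log_pow]; norm_num
    have hn : ((-1 - Real.cos α) / 2) ^ 2 ≠ 0 := by
      rw [e]
      exact pow_ne_zero 2 (by linarith)
    rw [hv]
    apply Tendsto.log _ hn
    have : Continuous (fun ε : ℝ => ((-1 - Real.cos α) / 2) ^ 2 + ε ^ 2) := by fun_prop
    have := (this.tendsto 0).mono_left (nhdsWithin_le_nhds (s := Ioi 0))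
    simpa using this
  have L := ((aux_lim hα).sub (hlim2.const_mul Real.pi)).const_mul (2 / Real.pi)
  have hval : -4 * Real.log (4 - 4 * x) = 2 / Real.pi * (-4 * Real.log 2 * Real.pi
      - Real.pi * (2 * Real.log (1 - x))) := by
    rw [show 4 - 4 * x = 2 ^ 2 * (1 - x) by ring, Real.log_mul (by norm_num) (by linarith),
      Real.log_pow]
    have := Real.pi_ne_zero
    field_simp
    push_cast
    ring
  rw [hval]
  refine L.congr' ?_
  filter_upwards [self_mem_nhdsWithin] with ε hε
  rw [← aux_eq α hε, hc]
end

section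
/- For every x > 0, the reducer of the exponential density ρ(t) = e^{−t} on [0,∞) satisfies lim_{ε→0⁺} 2∫₀^∞ (x−t)·e^{−t}/((x−t)²+ε²) dt = 2·[ln(x) − ∫₀^∞ e^{−t}·ln|x−t| dt]. -/
open MeasureTheory Filter Set

lemma aux_P (x : ℝ) (hx : 0 < x) :
    IntegrableOn (fun t : ℝ => Real.exp (-t) * ((x - t) ^ 2 + 1)) (Ioi 0) := by
  have h := (exp_neg_integrableOn_Ioi (0:ℝ) (b := 1/2) (by norm_num)).const_mul (x^2+9)
  refine Integrable.mono' h (by fun_prop) ?_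
  filter_upwards [ae_restrict_mem measurableSet_Ioi] with t ht
  have ht : 0 < t := ht
  rw [Real.norm_of_nonneg (by positivity)]
  have h1 := Real.quadratic_le_exp_of_nonneg (x := t/2) (by linarith)
  have h2 : Real.exp (-t) = Real.exp (-(1/2) * t) * Real.exp (-(1/2) * t) := by
    rw [← Real.exp_add]; ring_nf
  have h3 : Real.exp (-(1/2) * t) * Real.exp (t/2) = 1 := by
    rw [← Real.exp_add]; ring_nf; simp
  have h4 : (x - t)^2 + 1 ≤ (x^2+9) * Real.exp (t/2) := by
    nlinarith [mul_pos hx ht, sq_nonneg x, sq_nonneg t]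
  rw [h2, mul_assoc]
  set a := Real.exp (-(1/2) * t)
  have ha : 0 < a := Real.exp_pos _
  calc a * (a * ((x - t)^2+1)) ≤ a * (a * ((x^2+9) * Real.exp (t/2))) := by gcongr
    _ = (x^2+9) * a * (a * Real.exp (t/2)) := by ring
    _ = _ := by rw [h3, mul_one]

lemma aux_log (x : ℝ) (hx : 0 < x) :
    IntegrableOn (fun t : ℝ => Real.exp (-t) * Real.log |x - t|) (Ioi 0) := by
  have hu : Ioi (0:ℝ) = Ioc 0 (x+1) ∪ Ioi (x+1) := (Ioc_union_Ioi_eq_Ioi (by linarith)).symm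
  have hm : Measurable (fun t : ℝ => Real.exp (-t) * Real.log |x - t|) := by fun_prop
  rw [hu]
  refine IntegrableOn.union ?_ ?_
  · have h := (intervalIntegral.intervalIntegrable_log' (a := x) (b := -1)).comp_sub_left x
    have h2 : IntervalIntegrable (fun t => Real.log (x - t)) volume 0 (x+1) := by
      convert h using 1 <;> simp
    have h3 := h2.continuousOn_mul (g := fun t => Real.exp (-t)) (by fun_prop)
    rw [intervalIntegrable_iff_integrableOn_Ioc_of_le (by linarith)] at h3
    simpa [Real.log_abs] using h3
  · have hP := (aux_P x hx).mono_set (Ioi_subset_Ioi (show (0:ℝ) ≤ x+1 by linarith))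
    refine Integrable.mono' hP hm.aestronglyMeasurable ?_
    filter_upwards [ae_restrict_mem measurableSet_Ioi] with t ht
    have ht : x + 1 < t := ht
    rw [norm_mul, Real.norm_of_nonneg (Real.exp_pos _).le]
    gcongr
    have h1 : |x - t| = t - x := by rw [abs_of_neg (by linarith)]; ring
    rw [h1, Real.norm_of_nonneg (Real.log_nonneg (by linarith))]
    have := Real.log_le_sub_one_of_pos (show 0 < t - x by linarith)
    nlinarith [sq_nonneg (t - x - 1)]

lemma aux_bound (x t ε : ℝ) (hxt : x ≠ t) (h1 : ε ≤ 1) (h0 : 0 < ε) :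
    ‖Real.exp (-t) * Real.log ((x-t)^2 + ε^2)‖ ≤
      2 * ‖Real.exp (-t) * Real.log |x - t|‖ + Real.exp (-t) * ((x - t) ^ 2 + 1) := by
  have hp : 0 < (x-t)^2 := by have := sub_ne_zero.2 hxt; positivity
  have hL : Real.log ((x-t)^2) = 2 * Real.log |x - t| := by
    rw [← sq_abs, Real.log_pow]; norm_num
  have hlo : Real.log ((x-t)^2) ≤ Real.log ((x-t)^2 + ε^2) :=
    Real.log_le_log hp (by nlinarith)
  have hhi := Real.log_le_sub_one_of_pos (show 0 < (x-t)^2 + ε^2 by positivity)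
  have key : |Real.log ((x-t)^2 + ε^2)| ≤ 2 * |Real.log (|x - t|)| + ((x-t)^2+1) := by
    have := neg_abs_le (Real.log |x - t|)
    have := abs_nonneg (Real.log |x - t|)
    rw [abs_le]; constructor <;> nlinarith
  rw [norm_mul, norm_mul, Real.norm_of_nonneg (Real.exp_pos _).le, Real.norm_eq_abs,
    Real.norm_eq_abs]
  nlinarith [Real.exp_pos (-t)]

lemma aux_dom (x : ℝ) (hx : 0 < x) : IntegrableOn (fun t : ℝ =>
    2 * ‖Real.exp (-t) * Real.log |x - t|‖ + Real.exp (-t) * ((x - t) ^ 2 + 1)) (Ioi 0) :=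
  ((aux_log x hx).norm.const_mul 2).add (aux_P x hx)

lemma aux_ne_s7 (x : ℝ) : ∀ᵐ t ∂(volume.restrict (Ioi (0:ℝ))), x ≠ t := by
  refine ae_restrict_of_ae ?_
  filter_upwards [compl_mem_ae_iff.2 (measure_singleton (μ := volume) x)] with t ht h
  exact ht (by simp [h])

lemma aux_parts (x ε : ℝ) (hx : 0 < x) (h0 : 0 < ε) (h1 : ε ≤ 1) :
    ∫ t in Ioi (0 : ℝ), (x - t) * Real.exp (-t) / ((x - t) ^ 2 + ε ^ 2) =
      1/2 * Real.log (x^2+ε^2) -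
        1/2 * ∫ t in Ioi (0 : ℝ), Real.exp (-t) * Real.log ((x-t)^2 + ε^2) := by
  have hpos : ∀ t, 0 < (x-t)^2 + ε^2 := fun t => by positivity
  have hA : IntegrableOn (fun t : ℝ => Real.exp (-t) * Real.log ((x-t)^2 + ε^2)) (Ioi 0) := by
    refine Integrable.mono' (aux_dom x hx) (by fun_prop) ?_
    filter_upwards [aux_ne_s7 x] with t ht using aux_bound x t ε ht h1 h0
  have hB : IntegrableOn (fun t : ℝ => (x - t) * Real.exp (-t) / ((x - t) ^ 2 + ε ^ 2))
      (Ioi 0) := by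
    refine Integrable.mono' ((aux_P x hx).const_mul (1/ε^2)) (Measurable.aestronglyMeasurable (by fun_prop)) ?_
    refine Eventually.of_forall fun t => ?_
    rw [norm_div, norm_mul, Real.norm_of_nonneg (Real.exp_pos _).le, Real.norm_eq_abs,
      Real.norm_of_nonneg (hpos t).le, div_mul_eq_mul_div, one_mul, mul_comm]
    have : |x - t| ≤ (x-t)^2 + 1 := by nlinarith [sq_abs (x-t), sq_nonneg (|x-t|-1)]
    gcongr
    nlinarith [sq_nonneg (x-t)]
  have hd : ∀ t ∈ Ici (0:ℝ), HasDerivAt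
      (fun t => -(1/2) * (Real.exp (-t) * Real.log ((x-t)^2 + ε^2)))
      (1/2 * (Real.exp (-t) * Real.log ((x-t)^2 + ε^2)) +
        (x - t) * Real.exp (-t) / ((x - t) ^ 2 + ε ^ 2)) t := by
    intro t _
    have e1 : HasDerivAt (fun t : ℝ => Real.exp (-t)) (Real.exp (-t) * (-1)) t :=
      (hasDerivAt_neg t).exp
    have e2 : HasDerivAt (fun t : ℝ => (x-t)^2 + ε^2) (2 * (x - t) * (-1)) t := by
      have := (((hasDerivAt_id t).const_sub x).pow 2).add_const (ε^2)
      simpa using this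
    have e3 := (e1.mul (e2.log (hpos t).ne')).const_mul (-(1/2))
    refine e3.congr_deriv ?_
    have := (hpos t).ne'
    field_simp
    ring
  have hI := (hA.const_mul (1/2)).add hB
  have ht := tendsto_zero_of_hasDerivAt_of_integrableOn_Ioi
    (fun t ht => hd t (Ioi_subset_Ici_self ht)) hI (hA.const_mul (-(1/2)))
  have := integral_Ioi_of_hasDerivAt_of_tendsto' hd hI ht
  rw [integral_add (hA.const_mul _) hB, integral_const_mul] at this
  simp at this
  simp
  linarith

theorem reducer_exponential (x : ℝ) (hx : 0 < x) :
    Tendsto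
      (fun ε : ℝ =>
        2 * ∫ t in Ioi (0 : ℝ), (x - t) * Real.exp (-t) / ((x - t) ^ 2 + ε ^ 2))
      (nhdsWithin 0 (Ioi 0))
      (nhds (2 * (Real.log x - ∫ t in Ioi (0 : ℝ), Real.exp (-t) * Real.log |x - t|))) := by
  refine Tendsto.const_mul 2 ?_
  have hev : ∀ᶠ ε : ℝ in nhdsWithin 0 (Ioi 0), 0 < ε ∧ ε ≤ 1 := by
    filter_upwards [Ioc_mem_nhdsGT (show (0:ℝ) < 1 by norm_num)] with ε h using h
  have hsq : Tendsto (fun ε : ℝ => ε^2) (nhdsWithin 0 (Ioi 0)) (nhds 0) := by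
    have : Tendsto (fun ε : ℝ => ε^2) (nhds 0) (nhds (0^2)) := (continuous_pow 2).tendsto 0
    simpa using this.mono_left nhdsWithin_le_nhds
  have hlog : ∀ y : ℝ, y ≠ 0 → Tendsto (fun ε : ℝ => Real.log (y^2 + ε^2))
      (nhdsWithin 0 (Ioi 0)) (nhds (2 * Real.log |y|)) := by
    intro y hy
    have h := (hsq.const_add (y^2)).log (by simpa using hy)
    have e : Real.log (y^2 + 0) = 2 * Real.log |y| := by
      rw [add_zero, ← sq_abs, Real.log_pow]; norm_num
    rwa [e] at h
  have hint : Tendsto (fun ε : ℝ => ∫ t in Ioi (0 : ℝ), Real.exp (-t) * Real.log ((x-t)^2 + ε^2))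
      (nhdsWithin 0 (Ioi 0))
      (nhds (∫ t in Ioi (0 : ℝ), Real.exp (-t) * (2 * Real.log |x - t|))) := by
    refine tendsto_integral_filter_of_dominated_convergence _ ?_ ?_ (aux_dom x hx) ?_
    · exact Eventually.of_forall fun ε => by fun_prop
    · filter_upwards [hev] with ε hε
      filter_upwards [aux_ne_s7 x] with t ht using aux_bound x t ε ht hε.2 hε.1
    · filter_upwards [aux_ne_s7 x] with t ht
      exact (hlog _ (sub_ne_zero.2 ht)).const_mul _
  have hfin := ((hlog x hx.ne').const_mul (1/2)).sub (hint.const_mul (1/2))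
  have e : 1/2 * (2 * Real.log |x|) -
      1/2 * ∫ t in Ioi (0 : ℝ), Real.exp (-t) * (2 * Real.log |x - t|) =
      Real.log x - ∫ t in Ioi (0 : ℝ), Real.exp (-t) * Real.log |x - t| := by
    simp_rw [mul_left_comm _ (2:ℝ)]
    rw [integral_const_mul, abs_of_pos hx]; ring
  rw [e] at hfin
  refine hfin.congr' ?_
  filter_upwards [hev] with ε hε using (aux_parts x ε hx hε.1 hε.2).symm
end

section
/- Let ρ be a nonnegative continuous probability density on a compact interval [a,b] (so ∫ₐᵇ ρ = 1) with moments cₖ = ∫ₐᵇ tᵏ ρ(t) dt. Then for every natural number n ≥ 1: lim_{ε→0⁺} ∫ₐᵇ∫ₐᵇ 2(x−t)·xⁿ·ρ(t)·ρ(x)/((x−t)²+ε²) dt dx = ∫ₐᵇ∫ₐᵇ ((xⁿ−tⁿ)/(x−t))·ρ(t)·ρ(x) dt dx = Σ_{k=0}^{n−1} cₖ·c_{n−1−k}. (This computes the moments of the reducer φ of ρ: σ'ₙ = Σ_{k=0}^{n−1} cₖ·c_{n−1−k}, the key step in Theorem 2.1.) -/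
open MeasureTheory Filter Set Finset

theorem aux_swap (a b : ℝ) (hab : a ≤ b) (F : ℝ → ℝ → ℝ) (hF : Continuous (Function.uncurry F)) :
    (∫ x in a..b, ∫ t in a..b, F x t) = ∫ x in a..b, ∫ t in a..b, F t x := by
  rw [intervalIntegral_intervalIntegral_swap]
  rw [uIoc_of_le hab]
  have : IntegrableOn (Function.uncurry F) (Icc a b ×ˢ Icc a b) :=
    hF.continuousOn.integrableOn_compact (isCompact_Icc.prod isCompact_Icc)
  exact this.mono_set (Set.prod_mono Ioc_subset_Icc_self Ioc_subset_Icc_self)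

theorem aux_lim_s8 (a b : ℝ) (hab : a ≤ b) (G : ℝ → ℝ → ℝ) (hG : Continuous (Function.uncurry G)) :
    Tendsto (fun ε : ℝ => ∫ x in a..b, ∫ t in a..b, (x - t) ^ 2 / ((x - t) ^ 2 + ε ^ 2) * G x t)
      (nhdsWithin 0 (Ioi 0)) (nhds (∫ x in a..b, ∫ t in a..b, G x t)) := by
  obtain ⟨M, hM⟩ := (isCompact_Icc.prod isCompact_Icc :
    IsCompact (Icc a b ×ˢ Icc a b)).exists_bound_of_continuousOn hG.continuousOn
  have hb : ∀ ε : ℝ, ∀ x ∈ Icc a b, ∀ t ∈ Icc a b,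
      ‖(x - t) ^ 2 / ((x - t) ^ 2 + ε ^ 2) * G x t‖ ≤ M := by
    intro ε x hx t ht
    have h1 := hM (x, t) ⟨hx, ht⟩
    simp only [Function.uncurry] at h1
    rw [norm_mul]
    have h2 : ‖(x - t) ^ 2 / ((x - t) ^ 2 + ε ^ 2)‖ ≤ 1 := by
      rw [Real.norm_of_nonneg (by positivity)]
      apply div_le_one_of_le₀ <;> nlinarith [sq_nonneg ε, sq_nonneg (x - t)]
    calc _ ≤ 1 * M := by gcongr
      _ = M := one_mul M
  have hc : ∀ ε : ℝ, ε ∈ Ioi (0:ℝ) → Continuous (Function.uncurry fun x t : ℝ =>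
      (x - t) ^ 2 / ((x - t) ^ 2 + ε ^ 2) * G x t) := by
    intro ε hε
    have hε' : 0 < ε := hε
    refine Continuous.mul (Continuous.div (by fun_prop) (by fun_prop) ?_) hG
    intro p
    positivity
  apply intervalIntegral.tendsto_integral_filter_of_dominated_convergence
    (fun _ => M * |b - a|)
  · filter_upwards [self_mem_nhdsWithin] with ε hε
    exact (intervalIntegral.continuous_parametric_intervalIntegral_of_continuous'
      (hc ε hε) a b).aestronglyMeasurable
  · refine Eventually.of_forall fun ε => Eventually.of_forall fun x hx => ?_
    rw [uIoc_of_le hab] at hx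
    apply intervalIntegral.norm_integral_le_of_norm_le_const
    intro t ht
    rw [uIoc_of_le hab] at ht
    exact hb ε x (Ioc_subset_Icc_self hx) t (Ioc_subset_Icc_self ht)
  · exact intervalIntegrable_const
  · refine Eventually.of_forall fun x hx => ?_
    rw [uIoc_of_le hab] at hx
    apply intervalIntegral.tendsto_integral_filter_of_dominated_convergence (fun _ => M)
    · filter_upwards [self_mem_nhdsWithin] with ε hε
      exact ((hc ε hε).comp (Continuous.prodMk_right x)).aestronglyMeasurable
    · refine Eventually.of_forall fun ε => Eventually.of_forall fun t ht => ?_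
      rw [uIoc_of_le hab] at ht
      exact hb ε x (Ioc_subset_Icc_self hx) t (Ioc_subset_Icc_self ht)
    · exact intervalIntegrable_const
    · filter_upwards [Measure.ae_ne volume x] with t ht _
      have h0 : (x - t) ^ 2 ≠ 0 := pow_ne_zero _ (sub_ne_zero.2 (Ne.symm ht))
      have : ContinuousAt (fun ε : ℝ => (x - t) ^ 2 / ((x - t) ^ 2 + ε ^ 2) * G x t) 0 := by
        refine ContinuousAt.mul (ContinuousAt.div (by fun_prop) (by fun_prop) ?_) (by fun_prop)
        simpa using h0
      have h2 := this.tendsto.mono_left (nhdsWithin_le_nhds (s := Ioi 0))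
      simpa [h0, div_self] using h2

theorem aux_main (a b : ℝ) (hab : a ≤ b) (r : ℝ → ℝ) (hr : Continuous r)
    (n : ℕ) (ε : ℝ) (hε : 0 < ε) :
    (∫ x in a..b, ∫ t in a..b,
        2 * (x - t) * x ^ n * r t * r x / ((x - t) ^ 2 + ε ^ 2)) =
    ∫ x in a..b, ∫ t in a..b, (x - t) ^ 2 / ((x - t) ^ 2 + ε ^ 2) *
      ((∑ k ∈ Finset.range n, t ^ k * x ^ (n - 1 - k)) * r t * r x) := by
  set F : ℝ → ℝ → ℝ := fun x t => 2 * (x - t) * x ^ n * r t * r x / ((x - t) ^ 2 + ε ^ 2) with hF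
  have hFc : Continuous (Function.uncurry F) := by
    refine Continuous.div (by fun_prop) (by fun_prop) ?_
    intro p
    positivity
  have hFc' : Continuous (Function.uncurry fun x t => F t x) := hFc.comp continuous_swap
  have hsw := aux_swap a b hab F hFc
  have key : (∫ x in a..b, ∫ t in a..b, F x t) + (∫ x in a..b, ∫ t in a..b, F t x) =
      ∫ x in a..b, ∫ t in a..b, 2 * ((x - t) ^ 2 / ((x - t) ^ 2 + ε ^ 2) *
      ((∑ k ∈ Finset.range n, t ^ k * x ^ (n - 1 - k)) * r t * r x)) := by
    rw [← intervalIntegral.integral_add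
      ((intervalIntegral.continuous_parametric_intervalIntegral_of_continuous'
        hFc a b).intervalIntegrable _ _)
      ((intervalIntegral.continuous_parametric_intervalIntegral_of_continuous'
        hFc' a b).intervalIntegrable _ _)]
    congr 1
    ext x
    have i1 : Continuous fun t => F x t := hFc.comp (Continuous.prodMk_right x)
    have i2 : Continuous fun t => F t x := hFc'.comp (Continuous.prodMk_right x)
    rw [← intervalIntegral.integral_add (i1.intervalIntegrable _ _) (i2.intervalIntegrable _ _)]
    congr 1
    ext t
    have hg := (Commute.all t x).geom_sum₂_mul n
    generalize (∑ k ∈ Finset.range n, t ^ k * x ^ (n - 1 - k)) = S at hg ⊢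
    have e : (t - x) ^ 2 = (x - t) ^ 2 := by ring
    have hp : (x - t) ^ 2 + ε ^ 2 ≠ 0 := by positivity
    simp only [hF, e]
    field_simp
    linear_combination ((x - t) * r t * r x) * hg
  simp only [intervalIntegral.integral_const_mul] at key hsw ⊢
  linarith

theorem aux_second (a b : ℝ) (r : ℝ → ℝ) (hr : Continuous r) (n : ℕ) :
    (∫ x in a..b, ∫ t in a..b,
        (∑ k ∈ Finset.range n, t ^ k * x ^ (n - 1 - k)) * r t * r x) =
      ∑ k ∈ Finset.range n, (∫ t in a..b, t ^ k * r t) * (∫ t in a..b, t ^ (n - 1 - k) * r t) := by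
  have h1 : ∀ x, (∫ t in a..b, (∑ k ∈ Finset.range n, t ^ k * x ^ (n - 1 - k)) * r t * r x)
      = ∑ k ∈ Finset.range n, (∫ t in a..b, t ^ k * r t) * (x ^ (n - 1 - k) * r x) := by
    intro x
    simp only [← intervalIntegral.integral_mul_const]
    rw [← intervalIntegral.integral_finset_sum
      (fun k _ => Continuous.intervalIntegrable (by fun_prop) _ _)]
    congr 1
    ext t
    simp only [Finset.sum_mul]
    exact Finset.sum_congr rfl fun k _ => by ring
  simp only [h1]
  rw [intervalIntegral.integral_finset_sum
      (fun k _ => Continuous.intervalIntegrable (by fun_prop) _ _)]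
  simp only [intervalIntegral.integral_const_mul]

/-- Moments of the reducer (key step of Theorem 2.1): for a continuous nonnegative
probability density `ρ` on a compact interval `[a,b]` with moments `cₖ`, and every `n ≥ 1`,
`lim_{ε→0⁺} ∫ₐᵇ∫ₐᵇ 2(x−t)·xⁿ·ρ(t)·ρ(x)/((x−t)²+ε²) dt dx
  = ∫ₐᵇ∫ₐᵇ ((xⁿ−tⁿ)/(x−t))·ρ(t)·ρ(x) dt dx = Σ_{k=0}^{n−1} cₖ·c_{n−1−k}`,
where `(xⁿ−tⁿ)/(x−t)` denotes the polynomial `Σ_{k=0}^{n−1} tᵏ·x^{n−1−k}`. -/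
theorem reducer_moments (a b : ℝ) (hab : a < b) (ρ : ℝ → ℝ)
    (hcont : ContinuousOn ρ (Icc a b))
    (hnonneg : ∀ t ∈ Icc a b, 0 ≤ ρ t)
    (hprob : (∫ t in a..b, ρ t) = 1)
    (c : ℕ → ℝ) (hc : ∀ k, c k = ∫ t in a..b, t ^ k * ρ t)
    (n : ℕ) (hn : 1 ≤ n) :
    Tendsto
      (fun ε : ℝ =>
        ∫ x in a..b, ∫ t in a..b,
          2 * (x - t) * x ^ n * ρ t * ρ x / ((x - t) ^ 2 + ε ^ 2))
      (nhdsWithin 0 (Ioi 0))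
      (nhds (∑ k ∈ Finset.range n, c k * c (n - 1 - k))) ∧
    (∫ x in a..b, ∫ t in a..b,
        (∑ k ∈ Finset.range n, t ^ k * x ^ (n - 1 - k)) * ρ t * ρ x) =
      ∑ k ∈ Finset.range n, c k * c (n - 1 - k) := by
  have hle := hab.le
  set r : ℝ → ℝ := IccExtend hle ((Icc a b).restrict ρ) with hrdef
  have hr : Continuous r := (continuousOn_iff_continuous_restrict.1 hcont).Icc_extend'
  have hρ : ∀ t ∈ uIcc a b, ρ t = r t := by
    intro t ht
    rw [uIcc_of_le hle] at ht
    rw [hrdef, IccExtend_of_mem hle _ ht]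
    rfl
  have hc' : ∀ k, c k = ∫ t in a..b, t ^ k * r t := by
    intro k
    rw [hc k]
    exact intervalIntegral.integral_congr fun t ht => by simp only [hρ t ht]
  have h2 : (∫ x in a..b, ∫ t in a..b,
        (∑ k ∈ Finset.range n, t ^ k * x ^ (n - 1 - k)) * r t * r x) =
      ∑ k ∈ Finset.range n, c k * c (n - 1 - k) := by
    simp only [hc']
    exact aux_second a b r hr n
  constructor
  · rw [← h2]
    refine (aux_lim_s8 a b hle (fun x t =>
      (∑ k ∈ Finset.range n, t ^ k * x ^ (n - 1 - k)) * r t * r x) (by fun_prop)).congr' ?_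
    filter_upwards [self_mem_nhdsWithin] with ε hε
    rw [← aux_main a b hle r hr n ε hε]
    refine intervalIntegral.integral_congr fun x hx => ?_
    refine intervalIntegral.integral_congr fun t ht => ?_
    simp only [hρ t ht, hρ x hx]
  · rw [← h2]
    refine intervalIntegral.integral_congr fun x hx => ?_
    refine intervalIntegral.integral_congr fun t ht => ?_
    simp only [hρ t ht, hρ x hx]
end

section
/- Let ρ be an integrable nonnegative probability density on [0,1] and define, for a real polynomial P, the polynomial T_ρ(P)(x) = ∫₀¹ (P(t)−P(x))/(t−x)·ρ(t) dt. Then for all real polynomials f and P: ∫₀¹ T_ρ(f·P)(t)·ρ(t) dt = ∫₀¹ T_ρ(f)(t)·P(t)·ρ(t) dt + ∫₀¹ f(t)·T_ρ(P)(t)·ρ(t) dt. (Formula (F) of Theorem 3.1 in the polynomial case.) -/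
open MeasureTheory Filter Set Polynomial

/-- The operator creating secondary polynomials, acting on a real polynomial `P`:
`T_ρ(P)(x) = ∫₀¹ (P(t)−P(x))/(t−x)·ρ(t) dt`, where the integrand is the polynomial
quotient `(P − P(x)) /ₘ (X − x)` evaluated at `t`. -/
noncomputable def secOp (ρ : ℝ → ℝ) (P : Polynomial ℝ) (x : ℝ) : ℝ :=
  ∫ t in (0 : ℝ)..1, ((P - C (P.eval x)) /ₘ (X - C x)).eval t * ρ t

noncomputable def sK (P : Polynomial ℝ) (x t : ℝ) : ℝ :=
  ((P - C (P.eval x)) /ₘ (X - C x)).eval t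

lemma sK_spec (P : Polynomial ℝ) (x : ℝ) :
    (X - C x) * ((P - C (P.eval x)) /ₘ (X - C x)) = P - C (P.eval x) := by
  rw [mul_divByMonic_eq_iff_isRoot]
  simp

lemma sK_of_eq (P q : Polynomial ℝ) (x t : ℝ) (h : (X - C x) * q = P - C (P.eval x)) :
    sK P x t = q.eval t := by
  rw [sK, ← h, mul_divByMonic_cancel_left _ (monic_X_sub_C x)]

lemma sK_mul (f P : Polynomial ℝ) (x t : ℝ) :
    sK (f * P) x t = sK f x t * P.eval x + f.eval t * sK P x t := by
  rw [sK_of_eq (f * P) (((f - C (f.eval x)) /ₘ (X - C x)) * C (P.eval x) +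
    f * ((P - C (P.eval x)) /ₘ (X - C x)))]
  · simp [sK]
  · rw [mul_add, ← mul_assoc, sK_spec, mul_left_comm, sK_spec]
    simp only [eval_mul, C_mul]
    ring

lemma sK_add (f P : Polynomial ℝ) (x t : ℝ) :
    sK (f + P) x t = sK f x t + sK P x t := by
  rw [sK_of_eq (f + P) (((f - C (f.eval x)) /ₘ (X - C x)) +
    ((P - C (P.eval x)) /ₘ (X - C x)))]
  · simp [sK]
  · rw [mul_add, sK_spec, sK_spec]
    simp only [eval_add, C_add]
    ring

lemma sK_C (a : ℝ) (x t : ℝ) : sK (C a) x t = 0 := by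
  rw [sK_of_eq (C a) 0] <;> simp

lemma sK_X (x t : ℝ) : sK X x t = 1 := by
  rw [sK_of_eq X 1] <;> simp

lemma sK_symm (P : Polynomial ℝ) (x t : ℝ) : sK P x t = sK P t x := by
  by_cases h : x = t
  · rw [h]
  have h1 := congrArg (eval t) (sK_spec P x)
  have h2 := congrArg (eval x) (sK_spec P t)
  simp only [eval_mul, eval_sub, eval_X, eval_C] at h1 h2
  change (t - x) * sK P x t = _ at h1
  change (x - t) * sK P t x = _ at h2
  apply mul_left_cancel₀ (sub_ne_zero.mpr h)
  linarith

lemma sK_cont (P : Polynomial ℝ) : Continuous (fun z : ℝ × ℝ => sK P z.1 z.2) := by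
  induction P using Polynomial.induction_on with
  | C a => simp only [sK_C]; exact continuous_const
  | add p q hp hq => simp only [sK_add]; exact hp.add hq
  | monomial n a h =>
    have e : (C a * X ^ (n + 1) : Polynomial ℝ) = (C a * X ^ n) * X := by ring
    simp only [e, sK_mul _ X, sK_X]
    have h3 := (C a * X ^ n : Polynomial ℝ).continuous
    simp only [eval_X]
    fun_prop

lemma s_integrable (ρ : ℝ → ℝ) (hρ : IntegrableOn ρ (Icc 0 1)) (h : ℝ × ℝ → ℝ)
    (hc : Continuous h) :
    Integrable (fun z : ℝ × ℝ => h z * (ρ z.1 * ρ z.2))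
      ((volume.restrict (Icc (0:ℝ) 1)).prod (volume.restrict (Icc (0:ℝ) 1))) := by
  have := Integrable.mul_prod hρ hρ
  rw [Measure.prod_restrict] at this ⊢
  exact IntegrableOn.continuousOn_mul hc.continuousOn this (isCompact_Icc.prod isCompact_Icc)

lemma s_iter (ρ : ℝ → ℝ) (hρ : IntegrableOn ρ (Icc 0 1)) (h : ℝ × ℝ → ℝ)
    (hc : Continuous h) :
    (∫ x in (0:ℝ)..1, (∫ t in (0:ℝ)..1, h (x, t) * ρ t) * ρ x) =
    ∫ z, h z * (ρ z.1 * ρ z.2)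
      ∂((volume.restrict (Icc (0:ℝ) 1)).prod (volume.restrict (Icc (0:ℝ) 1))) := by
  rw [integral_prod _ (s_integrable ρ hρ h hc)]
  simp only [intervalIntegral.integral_of_le zero_le_one, ← integral_Icc_eq_integral_Ioc]
  congr 1
  ext x
  rw [← integral_mul_const]
  congr 1
  ext t
  ring

/-- Formula (F) of Theorem 3.1 in the polynomial case: for an integrable nonnegative
probability density `ρ` on `[0,1]` and all real polynomials `f`, `P`:
`∫₀¹ T_ρ(f·P)(t)·ρ(t) dt = ∫₀¹ T_ρ(f)(t)·P(t)·ρ(t) dt + ∫₀¹ f(t)·T_ρ(P)(t)·ρ(t) dt`. -/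
theorem secOp_mul_formula (ρ : ℝ → ℝ)
    (hint : IntervalIntegrable ρ MeasureTheory.volume 0 1)
    (hnonneg : ∀ t ∈ Icc (0 : ℝ) 1, 0 ≤ ρ t)
    (hprob : (∫ t in (0 : ℝ)..1, ρ t) = 1)
    (f P : Polynomial ℝ) :
    (∫ t in (0 : ℝ)..1, secOp ρ (f * P) t * ρ t) =
      (∫ t in (0 : ℝ)..1, secOp ρ f t * P.eval t * ρ t) +
        ∫ t in (0 : ℝ)..1, f.eval t * secOp ρ P t * ρ t := by
  have hρ : IntegrableOn ρ (Icc 0 1) :=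
    (intervalIntegrable_iff_integrableOn_Icc_of_le zero_le_one).1 hint
  have c1 : Continuous (fun z : ℝ × ℝ => sK f z.1 z.2 * P.eval z.1) :=
    (sK_cont f).mul (P.continuous.comp continuous_fst)
  have c2 : Continuous (fun z : ℝ × ℝ => f.eval z.2 * sK P z.1 z.2) :=
    (f.continuous.comp continuous_snd).mul (sK_cont P)
  have c3 : Continuous (fun z : ℝ × ℝ => f.eval z.1 * sK P z.1 z.2) :=
    (f.continuous.comp continuous_fst).mul (sK_cont P)
  have e0 := s_iter ρ hρ _ (sK_cont (f * P))
  have e1 := s_iter ρ hρ _ c1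
  have e3 := s_iter ρ hρ _ c3
  have r1 : ∀ x, secOp ρ f x * P.eval x =
      ∫ t in (0:ℝ)..1, (sK f x t * P.eval x) * ρ t := by
    intro x
    rw [secOp, ← intervalIntegral.integral_mul_const]
    congr 1
    ext t
    rw [sK]; ring
  have r3 : ∀ x, f.eval x * secOp ρ P x =
      ∫ t in (0:ℝ)..1, (f.eval x * sK P x t) * ρ t := by
    intro x
    rw [secOp, ← intervalIntegral.integral_const_mul]
    congr 1
    ext t
    rw [sK]; ring
  have r0 : ∀ x, secOp ρ (f * P) x = ∫ t in (0:ℝ)..1, sK (f * P) x t * ρ t := fun x => rfl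
  simp only [r0, r1, r3]
  rw [e0, e1, e3]
  have s := integral_prod_swap (μ := volume.restrict (Icc (0:ℝ) 1))
    (ν := volume.restrict (Icc (0:ℝ) 1))
    (fun z : ℝ × ℝ => (f.eval z.1 * sK P z.1 z.2) * (ρ z.1 * ρ z.2))
  rw [← s]
  have i2 := s_integrable ρ hρ _ c2
  have q : (fun z : ℝ × ℝ => (f.eval z.swap.1 * sK P z.swap.1 z.swap.2) *
      (ρ z.swap.1 * ρ z.swap.2)) =
      fun z : ℝ × ℝ => (f.eval z.2 * sK P z.1 z.2) * (ρ z.1 * ρ z.2) := by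
    ext z
    simp only [Prod.fst_swap, Prod.snd_swap]
    rw [sK_symm P z.2 z.1, mul_comm (ρ z.2)]
  rw [q, ← integral_add (s_integrable ρ hρ _ c1) i2]
  congr 1
  ext z
  rw [sK_mul]; ring
end

section
/- Let ρ, μ : [0,1] → ℝ be Lipschitz nonnegative functions with ρ(x) > 0 for x in (0,1), let c₁ = ∫₀¹ t·ρ(t) dt, and define φ(x) = 2ρ(x)·ln(x/(1−x)) − 2∫₀¹ (ρ(t)−ρ(x))/(t−x) dt for x in (0,1). Assume that for all x in (0,1): 2μ(x)·ln(x/(1−x)) − 2∫₀¹ (μ(t)−μ(x))/(t−x) dt = 2(x−c₁) − φ(x)·μ(x)/ρ(x). Let g : [0,1] → ℝ be continuous and such that the function h(x) = μ(x)·g(x)/ρ(x) extends to a Lipschitz function on [0,1]. Then for every x in (0,1): φ(x)·(μ(x)/ρ(x))·g(x) − ∫₀¹ (h(t)−h(x))/(t−x)·ρ(t) dt = (x−c₁)·g(x) − ∫₀¹ (g(t)−g(x))/(t−x)·μ(t) dt. (Identity (3.4.3), simplifying the solution of the integral equation T_ρ(f) = g.) -/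
open MeasureTheory Filter Set

theorem quot_integrable (f : ℝ → ℝ) (K : NNReal) (hf : LipschitzOnWith K f (Icc (0 : ℝ) 1))
    (x : ℝ) (hx : x ∈ Ioo (0 : ℝ) 1) :
    IntervalIntegrable (fun t => (f t - f x) / (t - x)) volume 0 1 := by
  rw [intervalIntegrable_iff_integrableOn_Icc_of_le zero_le_one]
  have hm : AEStronglyMeasurable (fun t => (f t - f x) / (t - x))
      (volume.restrict (Icc (0 : ℝ) 1)) := by
    have h1 : AEMeasurable f (volume.restrict (Icc (0 : ℝ) 1)) :=
      hf.continuousOn.aemeasurable measurableSet_Icc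
    exact ((h1.sub_const _).div (by fun_prop)).aestronglyMeasurable
  refine Integrable.of_bound hm (K : ℝ) ?_
  filter_upwards [ae_restrict_mem measurableSet_Icc] with t ht
  have h2 := hf.dist_le_mul t ht x ⟨hx.1.le, hx.2.le⟩
  rw [Real.dist_eq, Real.dist_eq] at h2
  rw [Real.norm_eq_abs, abs_div]
  exact div_le_of_le_mul₀ (abs_nonneg _) K.coe_nonneg h2

/-- Identity (3.4.3), simplifying the solution of the integral equation `T_ρ(f) = g`:
under formula (3.4.1) relating the reducers of `ρ` and of its secondary measure `μ`,
for every `x ∈ (0,1)`,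
`φ(x)·(μ(x)/ρ(x))·g(x) − T_ρ(μ·g/ρ)(x) = (x−c₁)·g(x) − T_μ(g)(x)`. -/
theorem solution_simplification (ρ μ : ℝ → ℝ) (Kρ Kμ : NNReal)
    (hρlip : LipschitzOnWith Kρ ρ (Icc (0 : ℝ) 1))
    (hμlip : LipschitzOnWith Kμ μ (Icc (0 : ℝ) 1))
    (hρnonneg : ∀ t ∈ Icc (0 : ℝ) 1, 0 ≤ ρ t)
    (hμnonneg : ∀ t ∈ Icc (0 : ℝ) 1, 0 ≤ μ t)
    (hρpos : ∀ t ∈ Ioo (0 : ℝ) 1, 0 < ρ t)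
    (c₁ : ℝ) (hc₁ : c₁ = ∫ t in (0 : ℝ)..1, t * ρ t)
    (φ : ℝ → ℝ)
    (hφ : ∀ x ∈ Ioo (0 : ℝ) 1,
      φ x = 2 * ρ x * Real.log (x / (1 - x)) -
        2 * ∫ t in (0 : ℝ)..1, (ρ t - ρ x) / (t - x))
    (h341 : ∀ x ∈ Ioo (0 : ℝ) 1,
      2 * μ x * Real.log (x / (1 - x)) -
          2 * (∫ t in (0 : ℝ)..1, (μ t - μ x) / (t - x)) =
        2 * (x - c₁) - φ x * μ x / ρ x)
    (g : ℝ → ℝ) (hg : ContinuousOn g (Icc (0 : ℝ) 1))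
    (h : ℝ → ℝ) (Kh : NNReal) (hhlip : LipschitzOnWith Kh h (Icc (0 : ℝ) 1))
    (hh : ∀ x ∈ Ioo (0 : ℝ) 1, h x = μ x * g x / ρ x)
    (x : ℝ) (hx : x ∈ Ioo (0 : ℝ) 1) :
    φ x * (μ x / ρ x) * g x -
        (∫ t in (0 : ℝ)..1, (h t - h x) / (t - x) * ρ t) =
      (x - c₁) * g x - ∫ t in (0 : ℝ)..1, (g t - g x) / (t - x) * μ t := by
  have iρ := quot_integrable ρ Kρ hρlip x hx
  have iμ := quot_integrable μ Kμ hμlip x hx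
  have ih : IntervalIntegrable (fun t => (h t - h x) / (t - x) * ρ t) volume 0 1 :=
    (quot_integrable h Kh hhlip x hx).mul_continuousOn
      (by rw [uIcc_of_le zero_le_one]; exact hρlip.continuousOn)
  have hρx := (hρpos x hx).ne'
  have key : (∫ t in (0 : ℝ)..1, (g t - g x) / (t - x) * μ t) =
      ∫ t in (0 : ℝ)..1, ((h t - h x) / (t - x) * ρ t + h x * ((ρ t - ρ x) / (t - x))
        - g x * ((μ t - μ x) / (t - x))) := by
    rw [intervalIntegral.integral_of_le zero_le_one, intervalIntegral.integral_of_le zero_le_one,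
      integral_Ioc_eq_integral_Ioo, integral_Ioc_eq_integral_Ioo]
    refine setIntegral_congr_fun measurableSet_Ioo fun t ht => ?_
    have hρt := (hρpos t ht).ne'
    beta_reduce
    rcases eq_or_ne t x with rfl | hne
    · simp
    have hd := sub_ne_zero.2 hne
    rw [hh t ht, hh x hx]
    field_simp
    ring
  rw [intervalIntegral.integral_sub (ih.add (iρ.const_mul _)) (iμ.const_mul _),
    intervalIntegral.integral_add ih (iρ.const_mul _), intervalIntegral.integral_const_mul,
    intervalIntegral.integral_const_mul] at key
  rw [key]
  generalize (∫ t in (0 : ℝ)..1, (h t - h x) / (t - x) * ρ t) = I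
  rw [hh x hx]
  have e1 := hφ x hx
  have e2 := h341 x hx
  have eA : (∫ t in (0 : ℝ)..1, (ρ t - ρ x) / (t - x)) =
      ρ x * Real.log (x / (1 - x)) - φ x / 2 := by linarith
  have eB : (∫ t in (0 : ℝ)..1, (μ t - μ x) / (t - x)) =
      μ x * Real.log (x / (1 - x)) - (x - c₁) + φ x * μ x / ρ x / 2 := by linarith
  rw [eA, eB]
  generalize Real.log (x / (1 - x)) = L
  field_simp
  ring
end

section
/- Let Pₙ(x) = (√(2n+1)/n!)·(dⁿ/dxⁿ)(xⁿ(1−x)ⁿ) be the normalized Legendre polynomials on [0,1], and let φ(x) = 2·ln(x/(1−x)) be the reducer of the Lebesgue measure on [0,1]. Then for every n ≥ 1, the Fourier coefficient Cₙ(φ) = ∫₀¹ φ(x)·Pₙ(x) dx equals 0 when n is even and equals −4·√(2n+1)/(n·(n+1)) when n is odd. -/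
open MeasureTheory Filter Set

open Polynomial in
theorem legAux_iter (p : ℝ[X]) (k : ℕ) :
    iteratedDeriv k (fun y : ℝ => p.eval y) = fun y => (derivative^[k] p).eval y := by
  induction k with
  | zero => simp
  | succ k ih =>
    rw [iteratedDeriv_succ, ih]
    funext y
    rw [Function.iterate_succ_apply', Polynomial.deriv]

open Polynomial in
theorem legAux_rec (n : ℕ) (u : ℝ[X])
    (hu : X * (1 - X) * derivative u = (n : ℝ[X]) * (1 - 2 * X) * u) (k : ℕ) :
    X * (1 - X) * derivative^[k+2] u + ((k : ℝ[X]) + 1 - (n : ℝ[X])) * (1 - 2 * X) * derivative^[k+1] u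
      + ((k : ℝ[X]) + 1) * (2 * (n : ℝ[X]) - (k : ℝ[X])) * derivative^[k] u = 0 := by
  induction k with
  | zero =>
    have h := congrArg derivative hu
    simp only [derivative_mul, derivative_sub, derivative_X, derivative_one, derivative_natCast,
      derivative_ofNat] at h
    simp only [zero_add, Function.iterate_succ_apply', Function.iterate_zero, id]
    push_cast
    linear_combination h
  | succ k ih =>
    have h := congrArg derivative ih
    simp only [derivative_mul, derivative_sub, derivative_add, derivative_X, derivative_one,
      derivative_natCast, derivative_ofNat, derivative_zero, ← Function.iterate_succ_apply'] at h
    push_cast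
    linear_combination h

open Polynomial in
theorem legAux_base (n : ℕ) :
    X * (1 - X) * derivative ((X : ℝ[X]) ^ n * (1 - X) ^ n)
      = (n : ℝ[X]) * (1 - 2 * X) * (X ^ n * (1 - X) ^ n) := by
  cases n with
  | zero => simp
  | succ m =>
    simp only [derivative_mul, derivative_pow, derivative_sub, derivative_X, derivative_one,
      Nat.add_sub_cancel, map_natCast]
    push_cast
    ring

open Polynomial in
theorem legAux_eval (n : ℕ) :
    (derivative^[n] ((X : ℝ[X]) ^ n * (1 - X) ^ n)).eval 0 = (n.factorial : ℝ) ∧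
    (derivative^[n] ((X : ℝ[X]) ^ n * (1 - X) ^ n)).eval 1 = (-1) ^ n * (n.factorial : ℝ) := by
  have h : derivative^[n] ((X : ℝ[X]) ^ n * (1 - X) ^ n)
      = ((n.factorial : ℤ[X]) * shiftedLegendre n).map (Int.castRingHom ℝ) := by
    rw [factorial_mul_shiftedLegendre_eq, ← iterate_derivative_map]
    simp
  have h0 : aeval (0 : ℝ) (shiftedLegendre n) = 1 := by
    rw [aeval_def, eval₂_at_zero, coeff_shiftedLegendre]
    simp
  have h1 : aeval (1 : ℝ) (shiftedLegendre n) = (-1) ^ n := by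
    rw [shiftedLegendre_eval_symm, sub_self, h0, mul_one]
  rw [aeval_def, ← eval_map] at h0 h1
  have e : algebraMap ℤ ℝ = Int.castRingHom ℝ := rfl
  rw [e] at h0 h1
  rw [h, Polynomial.map_mul, eval_mul, eval_mul, h0, h1]
  constructor
  · simp
  · simp [mul_comm]

open Polynomial in
theorem legAux_int (q : ℝ[X]) (l : ℝ) (hl : l ≠ 0)
    (hq : X * (1 - X) * derivative (derivative q) + (1 - 2 * X) * derivative q + C l * q = 0) :
    ∫ x in (0 : ℝ)..1, (Real.log x - Real.log (1 - x)) * q.eval x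
      = (q.eval 1 - q.eval 0) / l := by
  have hc := Real.continuous_mul_log
  have hc' : Continuous fun x : ℝ => (1 - x) * Real.log (1 - x) :=
    hc.comp (continuous_const.sub continuous_id)
  have key := intervalIntegral.integral_eq_sub_of_hasDerivAt_of_le (a := (0:ℝ)) (b := 1)
    (f := fun x => -(1 / l) * (((x * Real.log x) * (1 - x) - x * ((1 - x) * Real.log (1 - x)))
      * (derivative q).eval x - q.eval x))
    (f' := fun x => (Real.log x - Real.log (1 - x)) * q.eval x) zero_le_one ?_ ?_ ?_
  · rw [key]
    simp
    field_simp
  · apply Continuous.continuousOn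
    have := q.continuous
    have := (derivative q).continuous
    fun_prop
  · rintro x ⟨hx0, hx1⟩
    have hx : x ≠ 0 := hx0.ne'
    have hx' : 1 - x ≠ 0 := (sub_pos.2 hx1).ne'
    have hs : HasDerivAt (fun x : ℝ => 1 - x) (-1) x := by
      simpa using (hasDerivAt_id x).const_sub 1
    have d1 := (Real.hasDerivAt_mul_log hx).mul hs
    have d2 := (hasDerivAt_id x).mul ((Real.hasDerivAt_mul_log hx').comp x hs)
    have d := (((d1.sub d2).mul ((derivative q).hasDerivAt x)).sub (q.hasDerivAt x)).const_mul
      (-(1 / l))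
    have hq' := congrArg (Polynomial.eval x) hq
    simp at hq'
    refine d.congr_deriv ?_
    simp
    field_simp
    linear_combination (-(Real.log x - Real.log (1 - x))) * hq'
  · have i1 : IntervalIntegrable Real.log volume 0 1 := intervalIntegral.intervalIntegrable_log'
    have i2 : IntervalIntegrable (fun x => Real.log (1 - x)) volume 0 1 := by
      have := (intervalIntegral.intervalIntegrable_log' (a := 1) (b := 0)).comp_sub_left 1
      simpa using this
    exact (i1.sub i2).mul_continuousOn q.continuous.continuousOn

/-- Fourier coefficients of the reducer `φ(x) = 2·ln(x/(1−x))` of the Lebesgue measure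
on `[0,1]` in the normalized Legendre system
`Pₙ(x) = (√(2n+1)/n!)·(dⁿ/dxⁿ)(xⁿ(1−x)ⁿ)`: for `n ≥ 1`,
`Cₙ(φ) = ∫₀¹ φ·Pₙ` vanishes for even `n` and equals `−4√(2n+1)/(n(n+1))` for odd `n`. -/
theorem fourier_coefficients_reducer_legendre
    (P : ℕ → ℝ → ℝ)
    (hP : ∀ n x, P n x =
      (Real.sqrt (2 * (n : ℝ) + 1) / (Nat.factorial n : ℝ)) *
        iteratedDeriv n (fun y : ℝ => y ^ n * (1 - y) ^ n) x)
    (φ : ℝ → ℝ) (hφ : ∀ x, φ x = 2 * Real.log (x / (1 - x)))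
    (n : ℕ) (hn : 1 ≤ n) :
    (Even n → (∫ x in (0 : ℝ)..1, φ x * P n x) = 0) ∧
    (Odd n → (∫ x in (0 : ℝ)..1, φ x * P n x) =
      -4 * Real.sqrt (2 * (n : ℝ) + 1) / ((n : ℝ) * ((n : ℝ) + 1))) := by
  have hint : (∫ x in (0 : ℝ)..1, φ x * P n x)
      = 2 * Real.sqrt (2 * (n : ℝ) + 1) * ((-1) ^ n - 1) / ((n : ℝ) * ((n : ℝ) + 1)) := by
    have hn0 : (n : ℝ) ≠ 0 := by positivity
    have hl : (n : ℝ) * ((n : ℝ) + 1) ≠ 0 := by positivity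
    have hf : (n.factorial : ℝ) ≠ 0 := by positivity
    let q : Polynomial ℝ := Polynomial.derivative^[n] (Polynomial.X ^ n * (1 - Polynomial.X) ^ n)
    have hq := legAux_rec n _ (legAux_base n) n
    have I := legAux_int q _ hl (by
      simp only [Function.iterate_succ_apply'] at hq
      simp only [map_mul, map_add, map_natCast, map_one]
      linear_combination hq)
    obtain ⟨e0, e1⟩ := legAux_eval n
    have e : (∫ x in (0 : ℝ)..1, φ x * P n x)
        = ∫ x in (0 : ℝ)..1, (2 * (Real.sqrt (2 * (n : ℝ) + 1) / (Nat.factorial n : ℝ))) *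
          ((Real.log x - Real.log (1 - x)) * q.eval x) := by
      rw [intervalIntegral.integral_of_le zero_le_one, intervalIntegral.integral_of_le zero_le_one,
        integral_Ioc_eq_integral_Ioo, integral_Ioc_eq_integral_Ioo]
      apply setIntegral_congr_fun measurableSet_Ioo
      rintro x ⟨hx0, hx1⟩
      have hfun : (fun y : ℝ => y ^ n * (1 - y) ^ n) = fun y =>
          ((Polynomial.X ^ n * (1 - Polynomial.X) ^ n : Polynomial ℝ)).eval y := by
        funext y; simp
      simp only [hφ, hP]
      rw [hfun, legAux_iter, Real.log_div hx0.ne' (sub_pos.2 hx1).ne']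
      ring
    rw [e, intervalIntegral.integral_const_mul, I, e0, e1]
    field_simp
  rw [hint]
  constructor
  · intro h
    rw [h.neg_one_pow]; simp
  · intro h
    rw [h.neg_one_pow]; ring
end

section
/- Let Lₙ(x) = Σ_{k=0}^{n} binom(n,k)·(−1)ᵏ·xᵏ/k! be the Laguerre polynomials, orthonormal for the density ρ(x) = e^{−x} on [0,∞). Then for every n ≥ 1: ∫₀^∞ ∫₀^∞ ((Lₙ(t)−Lₙ(x))/(t−x))·e^{−t}·e^{−x} dt dx = −(1/n)·Σ_{k=0}^{n−1} 1/binom(n−1,k). (By Corollary 2.4 this double integral is the Fourier coefficient Cₙ(φ) of the reducer φ of the exponential density, exhibiting the row sums of the Leibniz harmonic triangle.) -/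
open MeasureTheory Filter Set Finset

lemma aux_beta (i j : ℕ) : ∫ x in (0:ℝ)..1, x ^ i * (1 - x) ^ j =
    (i.factorial * j.factorial : ℝ) / ((i + j + 1).factorial : ℝ) := by
  have h := Complex.betaIntegral_eq_Gamma_mul_div ((i:ℂ) + 1) ((j:ℂ) + 1)
    (by simp; positivity) (by simp; positivity)
  have e : ((i:ℂ) + 1) + ((j:ℂ) + 1) = ((i + j + 1 : ℕ) : ℂ) + 1 := by push_cast; ring
  rw [e, Complex.Gamma_nat_eq_factorial, Complex.Gamma_nat_eq_factorial,
    Complex.Gamma_nat_eq_factorial, Complex.betaIntegral] at h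
  simp only [add_sub_cancel_right, Complex.cpow_natCast] at h
  have h2 : ∫ x in (0:ℝ)..1, (x:ℂ) ^ i * (1 - (x:ℂ)) ^ j =
      ((∫ x in (0:ℝ)..1, x ^ i * (1 - x) ^ j : ℝ) : ℂ) := by
    rw [← intervalIntegral.integral_ofReal]
    push_cast
    rfl
  rw [h2] at h
  apply Complex.ofReal_injective
  rw [h]
  push_cast
  rfl

lemma aux_poly (n : ℕ) (u v : ℝ) (huv : u + v = 1) (hne : u ≠ v) :
    ∑ k ∈ Finset.range (n + 1), (Nat.choose n k : ℝ) * (-1 : ℝ) ^ k *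
      ∑ i ∈ Finset.range k, u ^ i * v ^ (k - 1 - i) =
    - ∑ i ∈ Finset.range n, u ^ i * v ^ (n - 1 - i) := by
  have hs : u - v ≠ 0 := sub_ne_zero.mpr hne
  apply mul_right_cancel₀ hs
  have g : ∀ k : ℕ, (∑ i ∈ Finset.range k, u ^ i * v ^ (k - 1 - i)) * (u - v) = u ^ k - v ^ k :=
    fun k => (Commute.all u v).geom_sum₂_mul k
  rw [neg_mul, g, Finset.sum_mul]
  have b : ∀ w : ℝ, ∑ k ∈ Finset.range (n + 1), (Nat.choose n k : ℝ) * (-1 : ℝ) ^ k * w ^ k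
      = (1 - w) ^ n := by
    intro w
    rw [show (1 - w) = (-w + 1) by ring, add_pow]
    refine Finset.sum_congr rfl fun k _ => ?_
    rw [neg_pow w]; simp; ring
  have hv : 1 - u = v := by linarith
  have hu : 1 - v = u := by linarith
  calc _ = ∑ k ∈ Finset.range (n + 1), ((Nat.choose n k : ℝ) * (-1 : ℝ) ^ k * u ^ k -
          (Nat.choose n k : ℝ) * (-1 : ℝ) ^ k * v ^ k) := by
        refine Finset.sum_congr rfl fun k _ => ?_
        rw [mul_assoc, g]; ring
    _ = _ := by rw [Finset.sum_sub_distrib, b, b, hu, hv]; ring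

lemma aux_A (m : ℕ) : ∫ x in (0:ℝ)..1, ∑ i ∈ Finset.range m, x ^ i * (1 - x) ^ (m - 1 - i) =
    (∑ i ∈ Finset.range m, (i.factorial * (m - 1 - i).factorial : ℝ)) / (m.factorial : ℝ) := by
  rw [intervalIntegral.integral_finsetSum]
  · rw [Finset.sum_div]
    refine Finset.sum_congr rfl fun i hi => ?_
    have := Finset.mem_range.mp hi
    rw [aux_beta, show i + (m - 1 - i) + 1 = m by omega]
  · intro i _
    apply Continuous.intervalIntegrable
    fun_prop

lemma aux_comb (n : ℕ) :
    ∑ k ∈ Finset.range (n + 1), (Nat.choose n k : ℝ) * (-1 : ℝ) ^ k *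
      ((∑ i ∈ Finset.range k, (i.factorial * (k - 1 - i).factorial : ℝ)) / (k.factorial : ℝ)) =
    - ((∑ i ∈ Finset.range n, (i.factorial * (n - 1 - i).factorial : ℝ)) / (n.factorial : ℝ)) := by
  simp_rw [← aux_A, ← intervalIntegral.integral_const_mul]
  rw [← intervalIntegral.integral_finsetSum, ← intervalIntegral.integral_neg]
  · apply intervalIntegral.integral_congr_ae
    have : ∀ᵐ x : ℝ, x ≠ 1 / 2 := by
      simp [ae_iff, measure_singleton]
    filter_upwards [this] with x hx _
    exact aux_poly n x (1 - x) (by ring) (fun h => hx (by linarith))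
  · intro i _
    apply Continuous.intervalIntegrable
    fun_prop

lemma aux_int_s15 (i : ℕ) : IntegrableOn (fun t : ℝ => t ^ i * Real.exp (-t)) (Ioi 0) := by
  have := Real.GammaIntegral_convergent (s := (i:ℝ) + 1) (by positivity)
  simpa [mul_comm] using this

lemma aux_val_s15 (i : ℕ) : ∫ t in Ioi (0:ℝ), t ^ i * Real.exp (-t) = i.factorial := by
  have := Real.Gamma_eq_integral (s := (i:ℝ) + 1) (by positivity)
  rw [Real.Gamma_nat_eq_factorial] at this
  simpa [mul_comm] using this.symm

lemma aux_quot (n : ℕ) (c : ℕ → ℝ) (t x : ℝ) (h : t ≠ x) :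
    (∑ k ∈ Finset.range (n + 1), c k * t ^ k - ∑ k ∈ Finset.range (n + 1), c k * x ^ k) / (t - x)
    = ∑ k ∈ Finset.range (n + 1), ∑ i ∈ Finset.range k, c k * (t ^ i * x ^ (k - 1 - i)) := by
  rw [div_eq_iff (sub_ne_zero.mpr h), ← Finset.sum_sub_distrib, Finset.sum_mul]
  refine Finset.sum_congr rfl fun k _ => ?_
  rw [← Finset.mul_sum, mul_assoc, (Commute.all t x).geom_sum₂_mul k]; ring

lemma aux_inner (n : ℕ) (c : ℕ → ℝ) (x : ℝ) :
    (∫ t in Ioi (0 : ℝ), (∑ k ∈ Finset.range (n + 1), c k * t ^ k -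
      ∑ k ∈ Finset.range (n + 1), c k * x ^ k) / (t - x) * Real.exp (-t) * Real.exp (-x)) =
    ∑ k ∈ Finset.range (n + 1), ∑ i ∈ Finset.range k,
      c k * i.factorial * (x ^ (k - 1 - i) * Real.exp (-x)) := by
  have e : (∫ t in Ioi (0 : ℝ), (∑ k ∈ Finset.range (n + 1), c k * t ^ k -
      ∑ k ∈ Finset.range (n + 1), c k * x ^ k) / (t - x) * Real.exp (-t) * Real.exp (-x)) =
      ∫ t in Ioi (0 : ℝ), ∑ k ∈ Finset.range (n + 1), ∑ i ∈ Finset.range k,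
        (c k * (x ^ (k - 1 - i) * Real.exp (-x))) * (t ^ i * Real.exp (-t)) := by
    apply integral_congr_ae
    apply ae_restrict_of_ae
    have : ∀ᵐ t : ℝ, t ≠ x := by
      simp [ae_iff, measure_singleton]
    filter_upwards [this] with t ht
    rw [aux_quot n c t x ht]
    simp_rw [Finset.sum_mul]
    refine Finset.sum_congr rfl fun k _ => Finset.sum_congr rfl fun i _ => ?_
    ring
  rw [e, integral_finsetSum]
  · refine Finset.sum_congr rfl fun k _ => ?_
    rw [integral_finsetSum]
    · refine Finset.sum_congr rfl fun i _ => ?_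
      rw [integral_const_mul, aux_val_s15]; ring
    · intro i _
      exact (aux_int_s15 i).const_mul _
  · intro k _
    apply integrable_finsetSum
    intro i _
    exact (aux_int_s15 i).const_mul _

/-- Fourier coefficients of the reducer of the exponential density in the Laguerre system
`Lₙ(x) = Σ_{k=0}^{n} binom(n,k)·(−1)ᵏ·xᵏ/k!`: for `n ≥ 1`,
`∫₀^∞∫₀^∞ ((Lₙ(t)−Lₙ(x))/(t−x))·e^{−t}·e^{−x} dt dx = −(1/n)·Σ_{k=0}^{n−1} 1/binom(n−1,k)`,
exhibiting the row sums of the Leibniz harmonic triangle. -/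
theorem fourier_coefficients_reducer_laguerre
    (L : ℕ → ℝ → ℝ)
    (hL : ∀ n x, L n x = ∑ k ∈ Finset.range (n + 1),
      (Nat.choose n k : ℝ) * (-1 : ℝ) ^ k * x ^ k / (Nat.factorial k : ℝ))
    (n : ℕ) (hn : 1 ≤ n) :
    (∫ x in Ioi (0 : ℝ), ∫ t in Ioi (0 : ℝ),
        (L n t - L n x) / (t - x) * Real.exp (-t) * Real.exp (-x)) =
      -(1 / (n : ℝ)) * ∑ k ∈ Finset.range n, 1 / (Nat.choose (n - 1) k : ℝ) := by
  have hL' : ∀ y, L n y = ∑ k ∈ Finset.range (n + 1),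
      ((Nat.choose n k : ℝ) * (-1 : ℝ) ^ k / (Nat.factorial k : ℝ)) * y ^ k := by
    intro y
    rw [hL]
    refine Finset.sum_congr rfl fun k _ => ?_
    ring
  simp_rw [hL', aux_inner]
  rw [integral_finsetSum]
  · have h1 : ∀ k, ∫ x in Ioi (0:ℝ), ∑ i ∈ Finset.range k,
        ((Nat.choose n k : ℝ) * (-1 : ℝ) ^ k / (Nat.factorial k : ℝ)) * i.factorial *
          (x ^ (k - 1 - i) * Real.exp (-x)) =
        (Nat.choose n k : ℝ) * (-1 : ℝ) ^ k *
      ((∑ i ∈ Finset.range k, (i.factorial * (k - 1 - i).factorial : ℝ)) / (k.factorial : ℝ)) := by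
      intro k
      rw [integral_finsetSum]
      · rw [Finset.sum_div, Finset.mul_sum]
        refine Finset.sum_congr rfl fun i _ => ?_
        rw [integral_const_mul, aux_val_s15]; ring
      · intro i _
        exact (aux_int_s15 _).const_mul _
    simp_rw [h1]
    rw [aux_comb, neg_mul, Finset.sum_div, Finset.mul_sum]
    congr 1
    refine Finset.sum_congr rfl fun i hi => ?_
    obtain ⟨m, rfl⟩ : ∃ m, n = m + 1 := ⟨n - 1, by omega⟩
    have hi' : i ≤ m := by have := Finset.mem_range.mp hi; omega
    simp only [Nat.add_sub_cancel]
    rw [Nat.cast_choose ℝ hi', Nat.factorial_succ]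
    have := Nat.factorial_pos m
    have := Nat.factorial_pos i
    have := Nat.factorial_pos (m - i)
    push_cast
    field_simp
  · intro k _
    apply integrable_finsetSum
    intro i _
    exact (aux_int_s15 _).const_mul _
end

section
/- For every natural number n ≥ 1: (1/n)·Σ_{k=0}^{n−1} 1/binom(n−1,k) = (1/2ⁿ)·Σ_{k=1}^{n} 2ᵏ/k. That is, the row sums sₙ of the reciprocals of binomial coefficients satisfy sₙ = Gₙ/2ⁿ where Gₙ = Σ_{k=1}^{n} 2ᵏ/k is the n-th 'geoharmonic' number. -/
open Finset

lemma leib_aux (m k : ℕ) (hk : k ≤ m) :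
    1 / ((m : ℝ) + 1) * (1 / (Nat.choose m k : ℝ)) =
      1 / ((m : ℝ) + 2) * (1 / (Nat.choose (m + 1) k : ℝ) + 1 / (Nat.choose (m + 1) (k + 1) : ℝ)) := by
  obtain ⟨d, rfl⟩ := Nat.exists_eq_add_of_le hk
  have h1 := Nat.add_one_mul_choose_eq (k + d) k
  have h2 := Nat.choose_mul_succ_eq (k + d) k
  rw [show k + d + 1 - k = d + 1 by omega] at h2
  have h1' : ((k : ℝ) + d + 1) * (Nat.choose (k + d) k : ℝ)
      = (Nat.choose (k + d + 1) (k + 1) : ℝ) * (k + 1) := by exact_mod_cast h1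
  have h2' : (Nat.choose (k + d) k : ℝ) * ((k : ℝ) + d + 1)
      = (Nat.choose (k + d + 1) k : ℝ) * (d + 1) := by exact_mod_cast h2
  have p0 : (Nat.choose (k + d) k : ℝ) ≠ 0 := by
    exact_mod_cast (Nat.choose_pos (by omega)).ne'
  have hk0 : (k : ℝ) + 1 ≠ 0 := by positivity
  have hd0 : (d : ℝ) + 1 ≠ 0 := by positivity
  have e1 := eq_div_of_mul_eq hk0 h1'.symm
  have e2 := eq_div_of_mul_eq hd0 h2'.symm
  have hs : (k : ℝ) + d + 1 ≠ 0 := by positivity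
  have hs2 : (k : ℝ) + d + 2 ≠ 0 := by positivity
  rw [e1, e2]
  push_cast
  field_simp
  ring

/-- Row sums of the Leibniz harmonic triangle: for every `n ≥ 1`,
`(1/n)·Σ_{k=0}^{n−1} 1/binom(n−1,k) = (1/2ⁿ)·Σ_{k=1}^{n} 2ᵏ/k`, i.e. `sₙ = Gₙ/2ⁿ`
where `Gₙ` is the n-th 'geoharmonic' number. -/
theorem leibniz_row_sum_eq_geoharmonic (n : ℕ) (hn : 1 ≤ n) :
    (1 / (n : ℝ)) * ∑ k ∈ Finset.range n, 1 / (Nat.choose (n - 1) k : ℝ) =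
      (1 / 2 ^ n) * ∑ k ∈ Finset.Icc 1 n, (2 : ℝ) ^ k / (k : ℝ) := by
  induction n, hn using Nat.le_induction with
  | base => simp
  | succ n hn ih =>
    obtain ⟨m, rfl⟩ := Nat.exists_eq_add_of_le' hn
    rw [Finset.sum_Icc_succ_top (by omega), mul_add]
    have e : (1 : ℝ) / 2 ^ (m + 1 + 1) * ∑ k ∈ Finset.Icc 1 (m + 1), (2 : ℝ) ^ k / (k : ℝ)
        = (1 / 2) * ((1 / 2 ^ (m + 1)) * ∑ k ∈ Finset.Icc 1 (m + 1), (2 : ℝ) ^ k / (k : ℝ)) := by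
      rw [pow_succ (2 : ℝ) (m + 1)]
      field_simp
    rw [e, ← ih]
    simp only [Nat.add_sub_cancel]
    have key : 1 / ((m : ℝ) + 1) * ∑ k ∈ Finset.range (m + 1), 1 / (Nat.choose m k : ℝ) =
        1 / ((m : ℝ) + 2) * (∑ k ∈ Finset.range (m + 1), 1 / (Nat.choose (m + 1) k : ℝ)
          + ∑ k ∈ Finset.range (m + 1), 1 / (Nat.choose (m + 1) (k + 1) : ℝ)) := by
      rw [← Finset.sum_add_distrib, Finset.mul_sum, Finset.mul_sum]
      refine Finset.sum_congr rfl fun k hk => leib_aux m k ?_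
      have := Finset.mem_range.mp hk
      omega
    have r1 := Finset.sum_range_succ (fun k => 1 / (Nat.choose (m + 1) k : ℝ)) (m + 1)
    have r2 := Finset.sum_range_succ' (fun k => 1 / (Nat.choose (m + 1) k : ℝ)) (m + 1)
    simp only [Nat.choose_self, Nat.choose_zero_right, Nat.cast_one, div_one] at r1 r2
    have hs2 : (m : ℝ) + 2 ≠ 0 := by positivity
    have c : ((m + 1 + 1 : ℕ) : ℝ) = (m : ℝ) + 2 := by push_cast; ring
    have c' : ((m + 1 : ℕ) : ℝ) = (m : ℝ) + 1 := by push_cast; ring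
    rw [c, c', key, eq_sub_of_add_eq r1.symm, eq_sub_of_add_eq r2.symm]
    field_simp
    ring
end

section
/- With Gₙ = Σ_{k=1}^{n} 2ᵏ/k, the series Σ_{n=1}^{∞} Gₙ²/4ⁿ converges and its sum equals 4π²/9. (Equivalently, Σ_{n=1}^{∞} sₙ² = 4π²/9 where sₙ = (1/n)·Σ_{k=0}^{n−1} 1/binom(n−1,k); this is the value of ∫₀^∞ 4·Ei(x)²·e^{−3x} dx obtained from the norm identity ‖φ‖²_ρ = (4π²/3)·‖ρ‖²_ρ for the exponential density.) -/
open Finset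

lemma gh_conv {f g : ℕ → ℝ} {a b : ℝ} (h : HasSum f a) (hfg : ∀ n, g n = f n) (hab : b = a) :
    HasSum g b := by
  rw [hab, show g = f from funext hfg]
  exact h

noncomputable def ghH (n : ℕ) : ℝ := ∑ i ∈ Finset.range n, 1 / ((i : ℝ) + 1)

lemma ghH_succ (n : ℕ) : ghH (n + 1) = ghH n + 1 / ((n : ℝ) + 1) := by
  simp [ghH, Finset.sum_range_succ]

lemma ghH_mono : Monotone ghH := by
  apply monotone_nat_of_le_succ
  intro n
  rw [ghH_succ]
  have : 0 ≤ 1 / ((n : ℝ) + 1) := by positivity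
  linarith

noncomputable def ghb (j n : ℕ) : ℝ :=
  ((n.factorial : ℝ) * j.factorial / (n + j + 1).factorial) * (ghH (n + j + 1) - ghH n)

lemma ghb_nonneg (j n : ℕ) : 0 ≤ ghb j n := by
  unfold ghb
  have := ghH_mono (show n ≤ n + j + 1 by omega)
  have : 0 ≤ ghH (n + j + 1) - ghH n := by linarith
  positivity

lemma ghb_rec (j n : ℕ) : ghb (j + 1) n = ghb j n - ghb j (n + 1) := by
  unfold ghb
  have e1 : n + 1 + j + 1 = (n + j + 1) + 1 := by ring
  have e2 : n + (j + 1) + 1 = (n + j + 1) + 1 := by ring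
  rw [e1, e2, ghH_succ (n + j + 1), ghH_succ n, Nat.factorial_succ (n + j + 1),
    Nat.factorial_succ n, Nat.factorial_succ j]
  have h := Nat.factorial_ne_zero (n + j + 1)
  have h' : ((n + j + 1).factorial : ℝ) ≠ 0 := by exact_mod_cast h
  have h2 : (n : ℝ) + 1 ≠ 0 := by positivity
  have h3 : (n : ℝ) + j + 1 + 1 ≠ 0 := by positivity
  push_cast
  field_simp
  ring

lemma ghb_zero (n : ℕ) : ghb 0 n = 1 / ((n : ℝ) + 1) ^ 2 := by
  unfold ghb
  have h' : (n.factorial : ℝ) ≠ 0 := by exact_mod_cast Nat.factorial_ne_zero n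
  have h2 : (n : ℝ) + 1 ≠ 0 := by positivity
  simp only [add_zero]
  rw [ghH_succ, Nat.factorial_succ]
  push_cast
  field_simp
  simp

lemma ghb_at_zero (j : ℕ) : ghb j 0 = 1 / ((j : ℝ) + 1) * ghH (j + 1) := by
  unfold ghb
  have h' : (j.factorial : ℝ) ≠ 0 := by exact_mod_cast Nat.factorial_ne_zero j
  have h2 : (j : ℝ) + 1 ≠ 0 := by positivity
  have h3 : ghH 0 = 0 := by simp [ghH]
  rw [zero_add, h3, Nat.factorial_succ]
  push_cast
  field_simp
  simp

lemma gh_zeta : HasSum (fun n : ℕ => 1 / ((n : ℝ) + 1) ^ 2) (Real.pi ^ 2 / 6) := by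
  have h := (hasSum_nat_add_iff' 1).mpr hasSum_zeta_two
  simpa using h

lemma ghb_le (j n : ℕ) : ghb j n ≤ ghb 0 n := by
  induction j with
  | zero => exact le_rfl
  | succ j ih => rw [ghb_rec]; linarith [ghb_nonneg j (n + 1)]

lemma ghb_summable (j : ℕ) : Summable (ghb j) := by
  refine Summable.of_nonneg_of_le (ghb_nonneg j) (ghb_le j) ?_
  exact gh_zeta.summable.congr (fun n => (ghb_zero n).symm ▸ rfl)

lemma ghb_alt_summable (j : ℕ) : Summable (fun n : ℕ => (-1 : ℝ) ^ n * ghb j n) := by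
  refine Summable.of_norm ?_
  refine (ghb_summable j).congr ?_
  intro n
  simp [abs_of_nonneg (ghb_nonneg j n)]

noncomputable def ghE (j : ℕ) : ℝ := ∑' n : ℕ, (-1 : ℝ) ^ n * ghb j n

lemma ghE_rec (j : ℕ) : 2 * ghE j = ghb j 0 + ghE (j + 1) := by
  have h1 := (ghb_alt_summable j).tsum_eq_zero_add
  have h2 : ghE (j + 1) = ghE j + ∑' n : ℕ, (-1 : ℝ) ^ (n + 1) * ghb j (n + 1) := by
    unfold ghE
    rw [← (ghb_alt_summable j).tsum_add ((summable_nat_add_iff 1).mpr (ghb_alt_summable j))]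
    congr 1
    ext n
    rw [ghb_rec]
    ring
  change ghE j = _ at h1
  simp only [pow_zero, one_mul] at h1
  linarith

lemma ghE_bound (j : ℕ) : |ghE j| ≤ Real.pi ^ 2 / 6 := by
  have h : HasSum (ghb 0) (Real.pi ^ 2 / 6) := by
    have := gh_zeta
    simpa only [← ghb_zero] using this
  refine (tsum_of_norm_bounded (f := fun n : ℕ => (-1 : ℝ) ^ n * ghb j n) h ?_ :)
  intro n
  simpa [abs_of_nonneg (ghb_nonneg j n)] using ghb_le j n

lemma ghE_zero : ghE 0 = Real.pi ^ 2 / 12 := by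
  have hz := gh_zeta
  have hs : Summable (fun n : ℕ => 1 / ((n : ℝ) + 1) ^ 2) := hz.summable
  have hodd : HasSum (fun n : ℕ => 1 / (((2 * n + 1 : ℕ) : ℝ) + 1) ^ 2) (Real.pi ^ 2 / 24) := by
    have := hz.mul_left (1 / 4)
    refine gh_conv this (fun n => ?_) ?_
    · push_cast
      have h2 : (n : ℝ) + 1 ≠ 0 := by positivity
      have h3 : 2 * (n : ℝ) + 1 + 1 ≠ 0 := by positivity
      field_simp
      ring
    · ring
  have heven : Summable (fun n : ℕ => 1 / (((2 * n : ℕ) : ℝ) + 1) ^ 2) :=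
    hs.comp_injective (i := fun n : ℕ => 2 * n) (fun a b h => by simpa using h)
  have hsum := HasSum.even_add_odd (f := fun n : ℕ => 1 / ((n : ℝ) + 1) ^ 2) heven.hasSum hodd
  have hval := hsum.unique hz
  have halt := HasSum.even_add_odd (f := fun n : ℕ => (-1 : ℝ) ^ n * ghb 0 n)
    (m := ∑' n : ℕ, 1 / (((2 * n : ℕ) : ℝ) + 1) ^ 2) (m' := - (Real.pi ^ 2 / 24))
    (by
      refine gh_conv heven.hasSum (fun n => ?_) rfl
      simp [ghb_zero, pow_mul])
    (by
      refine gh_conv hodd.neg (fun n => ?_) rfl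
      simp [ghb_zero, pow_mul, pow_succ])
  unfold ghE
  rw [halt.tsum_eq]
  linarith

lemma ghE_partial (N : ℕ) :
    ∑ i ∈ Finset.range N, ghb i 0 / 2 ^ i = 2 * ghE 0 - 2 * ghE N / 2 ^ N := by
  induction N with
  | zero => simp
  | succ N ih =>
    rw [Finset.sum_range_succ, ih, ghE_rec N, pow_succ]
    field_simp
    ring

lemma gh_euler : HasSum (fun j : ℕ => ghb j 0 / 2 ^ j) (Real.pi ^ 2 / 6) := by
  rw [hasSum_iff_tendsto_nat_of_nonneg
    (fun j => div_nonneg (ghb_nonneg j 0) (by positivity))]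
  simp only [ghE_partial]
  have h0 : Filter.Tendsto (fun N : ℕ => 2 * ghE N / 2 ^ N) Filter.atTop (nhds 0) := by
    have hg : Filter.Tendsto (fun N : ℕ => 2 * (Real.pi ^ 2 / 6) * (1 / 2 : ℝ) ^ N)
        Filter.atTop (nhds 0) := by
      simpa using (tendsto_pow_atTop_nhds_zero_of_lt_one (r := (1 / 2 : ℝ))
        (by norm_num) (by norm_num)).const_mul (2 * (Real.pi ^ 2 / 6))
    refine squeeze_zero_norm (fun N => ?_) hg
    rw [Real.norm_eq_abs, abs_div, abs_mul, abs_of_pos (show (0 : ℝ) < 2 by norm_num),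
      abs_of_pos (show (0 : ℝ) < 2 ^ N by positivity), one_div, inv_pow, div_eq_mul_inv]
    have := ghE_bound N
    gcongr
  have := h0.const_sub (2 * ghE 0)
  rw [ghE_zero] at this ⊢
  convert this using 2
  ring

lemma gh_tele (i : ℕ) :
    HasSum (fun k : ℕ => 1 / ((k : ℝ) + i + 1) - 1 / ((k : ℝ) + i + 2)) (1 / ((i : ℝ) + 1)) := by
  rw [hasSum_iff_tendsto_nat_of_nonneg]
  · have e : ∀ N : ℕ, ∑ k ∈ Finset.range N, (1 / ((k : ℝ) + i + 1) - 1 / ((k : ℝ) + i + 2))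
        = 1 / ((i : ℝ) + 1) - 1 / (((N + i : ℕ) : ℝ) + 1) := by
      intro N
      induction N with
      | zero => simp
      | succ N ih =>
        rw [Finset.sum_range_succ, ih]
        push_cast
        ring
    simp only [e]
    have h := (tendsto_one_div_add_atTop_nhds_zero_nat (𝕜 := ℝ))
    have h2 := ((Filter.tendsto_add_atTop_iff_nat i).mpr h).const_sub (1 / ((i : ℝ) + 1))
    simpa using h2
  · intro k
    rw [sub_nonneg]
    apply one_div_le_one_div_of_le <;> [positivity; linarith]

lemma gh_inner (m : ℕ) :
    HasSum (fun k : ℕ => 1 / (2 ^ m * ((k : ℝ) + 1) * ((k : ℝ) + m + 2))) (ghb m 0 / 2 ^ m) := by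
  have h := hasSum_sum (s := Finset.range (m + 1)) (fun i _ => gh_tele i)
  have h2 := h.mul_left (1 / ((m : ℝ) + 1) / 2 ^ m)
  have e : ∀ k M : ℕ, ∑ i ∈ Finset.range M, (1 / ((k : ℝ) + i + 1) - 1 / ((k : ℝ) + i + 2))
      = 1 / ((k : ℝ) + 1) - 1 / ((k : ℝ) + M + 1) := by
    intro k M
    induction M with
    | zero => simp
    | succ M ih =>
      rw [Finset.sum_range_succ, ih]
      push_cast
      ring
  simp only [e] at h2
  refine gh_conv h2 (fun k => ?_) ?_
  · have h1 : (k : ℝ) + 1 ≠ 0 := by positivity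
    have h2 : (k : ℝ) + m + 2 ≠ 0 := by positivity
    have h3 : (k : ℝ) + (m + 1) + 1 ≠ 0 := by positivity
    have h4 : (m : ℝ) + 1 ≠ 0 := by positivity
    push_cast
    field_simp
    ring
  · rw [ghb_at_zero, ghH]
    ring

lemma gh_double : HasSum
    (fun n : ℕ => ∑ p ∈ Finset.HasAntidiagonal.antidiagonal n,
      1 / (2 ^ p.1 * ((p.2 : ℝ) + 1) * ((p.2 : ℝ) + p.1 + 2))) (Real.pi ^ 2 / 6) := by
  let f : ℕ × ℕ → ℝ := fun p => 1 / (2 ^ p.1 * ((p.2 : ℝ) + 1) * ((p.2 : ℝ) + p.1 + 2))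
  have hf : 0 ≤ f := fun p => by dsimp only [f, Pi.zero_apply]; positivity
  have hs : Summable f := by
    rw [summable_prod_of_nonneg hf]
    refine ⟨fun m => (gh_inner m).summable, ?_⟩
    exact gh_euler.summable.congr (fun m => ((gh_inner m).tsum_eq).symm)
  have hv : HasSum f (Real.pi ^ 2 / 6) := by
    have h1 := hs.hasSum.prod_fiberwise (fun m => gh_inner m)
    have := h1.unique gh_euler
    rw [← this]
    exact hs.hasSum
  have h2 := (Finset.HasAntidiagonal.sigmaAntidiagonalEquivProd (A := ℕ)).hasSum_iff.mpr hv
  have h3 := h2.sigma (fun n => hasSum_fintype _)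
  refine gh_conv h3 (fun n => ?_) rfl
  rw [← Finset.sum_coe_sort]
  rfl

theorem gh_main (s : ℕ → ℝ) (h0 : s 0 = 0)
    (hr : ∀ n : ℕ, s (n + 1) = s n / 2 + 1 / ((n : ℝ) + 1)) :
    HasSum (fun n : ℕ => s (n + 1) ^ 2) (4 * Real.pi ^ 2 / 9) := by
  have hs : ∀ n : ℕ, s (n + 1) = ∑ p ∈ Finset.HasAntidiagonal.antidiagonal n, 1 / (2 ^ p.1 * ((p.2 : ℝ) + 1)) := by
    intro n
    induction n with
    | zero => simp [hr, h0]
    | succ n ih =>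
      rw [hr, ih, Finset.Nat.sum_antidiagonal_succ, Finset.sum_div]
      rw [add_comm]
      congr 1
      · simp
      · apply Finset.sum_congr rfl
        intro p _
        rw [pow_succ]
        have : (p.2 : ℝ) + 1 ≠ 0 := by positivity
        field_simp
  have hT : HasSum (fun n : ℕ => s (n + 1) / ((n : ℝ) + 2)) (Real.pi ^ 2 / 6) := by
    refine gh_conv gh_double (fun n => ?_) rfl
    rw [hs, Finset.sum_div]
    apply Finset.sum_congr rfl
    intro p hp
    have : (n : ℝ) = p.2 + p.1 := by
      rw [← Finset.HasAntidiagonal.mem_antidiagonal.mp hp]; push_cast; ring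
    rw [this, div_div]
  have hT' : HasSum (fun n : ℕ => s n / ((n : ℝ) + 1)) (Real.pi ^ 2 / 6) := by
    rw [← hasSum_nat_add_iff' 1]
    refine gh_conv hT (fun n => ?_) ?_
    · push_cast
      ring
    · simp [h0]
  have hC := hT'.add gh_zeta
  have hsq : ∀ n : ℕ, s (n + 1) ^ 2 = s n ^ 2 / 4 + (s n / ((n : ℝ) + 1) + 1 / ((n : ℝ) + 1) ^ 2) := by
    intro n
    rw [hr]
    have : (n : ℝ) + 1 ≠ 0 := by positivity
    field_simp
    ring
  have hpos : ∀ n, 0 ≤ s n := by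
    intro n
    induction n with
    | zero => simp [h0]
    | succ n ih => rw [hr]; positivity
  have hsum : Summable (fun n : ℕ => s n ^ 2) := by
    refine summable_of_sum_range_le (c := 4 / 3 * (Real.pi ^ 2 / 6 + Real.pi ^ 2 / 6))
      (fun n => sq_nonneg _) ?_
    intro N
    have h1 : ∑ n ∈ Finset.range N, (s n / ((n : ℝ) + 1) + 1 / ((n : ℝ) + 1) ^ 2) ≤
        Real.pi ^ 2 / 6 + Real.pi ^ 2 / 6 :=
      sum_le_hasSum _ (fun n _ => by have := hpos n; positivity) hC
    have h2 := Finset.sum_range_succ (fun n => s n ^ 2) N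
    have h3 := Finset.sum_range_succ' (fun n => s n ^ 2) N
    simp only [hsq, Finset.sum_add_distrib, ← Finset.sum_div, h0] at h1 h3
    have h4 := sq_nonneg (s N)
    linarith
  have hsh := (summable_nat_add_iff 1).mpr hsum
  have e1 := hsum.tsum_eq_zero_add
  have e2 := ((hsum.hasSum.div_const 4).add hC)
  have e3 : HasSum (fun n : ℕ => s (n + 1) ^ 2) _ := e2.congr_fun hsq
  have e4 := e3.tsum_eq
  rw [h0] at e1
  refine gh_conv e3 (fun n => rfl) ?_
  linarith

/-- With `Gₙ = Σ_{k=1}^{n} 2ᵏ/k` the 'geoharmonic' numbers, the series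
`Σ_{n=1}^{∞} Gₙ²/4ⁿ` converges with sum `4π²/9`. -/
theorem geoharmonic_square_series
    (G : ℕ → ℝ) (hG : ∀ n, G n = ∑ k ∈ Finset.Icc 1 n, (2 : ℝ) ^ k / (k : ℝ)) :
    HasSum (fun n : ℕ => (G (n + 1)) ^ 2 / 4 ^ (n + 1)) (4 * Real.pi ^ 2 / 9) := by
  have h := gh_main (fun n => G n / 2 ^ n) (by simp [hG]) (by
    intro n
    have : G (n + 1) = G n + 2 ^ (n + 1) / ((n : ℝ) + 1) := by
      rw [hG, hG, Finset.sum_Icc_succ_top (by omega)]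
      push_cast
      rfl
    simp only [this]
    have h1 : (n : ℝ) + 1 ≠ 0 := by positivity
    rw [pow_succ]
    field_simp)
  refine gh_conv h (fun n => ?_) rfl
  rw [div_pow, ← pow_mul, mul_comm (n + 1) 2, pow_mul]
  norm_num
end

section
/- With Gₙ = Σ_{k=1}^{n} 2ᵏ/k, for every real x with |x| < 1/2 the series Σ_{n=1}^{∞} Gₙ·xⁿ converges and its sum equals ln(1−2x)/(x−1). -/
open Finset

/-- With `Gₙ = Σ_{k=1}^{n} 2ᵏ/k` the 'geoharmonic' numbers, for every real `x` with
`|x| < 1/2` the series `Σ_{n=1}^{∞} Gₙ·xⁿ` converges with sum `ln(1−2x)/(x−1)`. -/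
theorem geoharmonic_generating_function
    (G : ℕ → ℝ) (hG : ∀ n, G n = ∑ k ∈ Finset.Icc 1 n, (2 : ℝ) ^ k / (k : ℝ))
    (x : ℝ) (hx : |x| < 1 / 2) :
    HasSum (fun n : ℕ => G (n + 1) * x ^ (n + 1)) (Real.log (1 - 2 * x) / (x - 1)) := by
  have h2 : |2 * x| < 1 := by
    rw [abs_mul, abs_two]; linarith
  have h1 : |x| < 1 := by linarith
  have hf := Real.hasSum_pow_div_log_of_abs_lt_one h2
  have hg := hasSum_geometric_of_abs_lt_one h1
  have key := hasSum_sum_range_mul_of_summable_norm hf.summable.norm hg.summable.norm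
  rw [hf.tsum_eq, hg.tsum_eq] at key
  have hne : 1 - x ≠ 0 := by
    have := (abs_lt.mp h1).2
    linarith
  have hne' : x - 1 ≠ 0 := fun h => hne (by linarith)
  have e : Real.log (1 - 2 * x) / (x - 1) = -Real.log (1 - 2 * x) * (1 - x)⁻¹ := by
    rw [← neg_sub 1 x, div_neg, div_eq_mul_inv, neg_mul]
  rw [e]
  refine Eq.mp (congrArg (fun f : ℕ → ℝ => HasSum f _) ?_) key
  funext n
  symm
  have hr : Finset.Icc 1 (n + 1) = Finset.Ico (0 + 1) (n + 1 + 1) := by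
    ext a; simp only [Finset.mem_Icc, Finset.mem_Ico]; omega
  rw [hG, Finset.sum_mul, hr, Finset.range_eq_Ico, ← Finset.sum_Ico_add']
  refine Finset.sum_congr rfl fun k hk => ?_
  have hk' : k ≤ n := by
    have := (Finset.mem_Ico.mp hk).2
    omega
  have hs : x ^ (n + 1) = x ^ (k + 1) * x ^ (n - k) := by
    rw [← pow_add]; congr 1; omega
  rw [hs, mul_pow]
  push_cast
  ring
end

section
/- With Gₙ = Σ_{k=1}^{n} 2ᵏ/k, for every real x the series Σ_{n=1}^{∞} (Gₙ/n!)·xⁿ converges and its sum equals eˣ·∫₀ˣ (eᵗ−e^{−t})/t dt = eˣ·Σ_{n=1}^{∞} (1+(−1)^{n+1})·xⁿ/(n·n!). -/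
open Finset MeasureTheory

lemma gh_comb (n : ℕ) :
    ∑ k ∈ Finset.range (n + 1), (n.choose k : ℝ) * ((1 - (-1 : ℝ) ^ k) / (k : ℝ)) =
      ∑ k ∈ Finset.Icc 1 n, (2 : ℝ) ^ k / (k : ℝ) := by
  induction n with
  | zero => simp
  | succ n ih =>
    rw [Finset.sum_Icc_succ_top (by omega), ← ih]
    rw [Finset.sum_range_succ']
    have h1 : ∑ k ∈ Finset.range (n + 1), (n.choose k : ℝ) * ((1 - (-1 : ℝ) ^ k) / (k : ℝ))
        = ∑ k ∈ Finset.range (n + 1),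
          (n.choose (k + 1) : ℝ) * ((1 - (-1 : ℝ) ^ (k + 1)) / ((k + 1 : ℕ) : ℝ)) := by
      rw [Finset.sum_range_succ', Finset.sum_range_succ (n := n)]
      simp
    have h2 : ∑ k ∈ Finset.range (n + 1),
          (n.choose k : ℝ) * ((1 - (-1 : ℝ) ^ (k + 1)) / ((k + 1 : ℕ) : ℝ))
        = 2 ^ (n + 1) / ((n + 1 : ℕ) : ℝ) := by
      have h3 : ∑ k ∈ Finset.range (n + 1 + 1), ((n + 1).choose k : ℝ) * (1 - (-1 : ℝ) ^ k)
          = 2 ^ (n + 1) := by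
        have e1 := add_pow (1 : ℝ) 1 (n + 1)
        have e2 := add_pow (-1 : ℝ) 1 (n + 1)
        simp only [one_pow, mul_one, one_mul] at e1 e2
        rw [neg_add_cancel, zero_pow (by omega)] at e2
        simp only [mul_sub, mul_one, Finset.sum_sub_distrib]
        rw [← e1]
        have : ∑ k ∈ Finset.range (n + 1 + 1), ((n + 1).choose k : ℝ) * (-1 : ℝ) ^ k = 0 := by
          rw [e2]
          exact Finset.sum_congr rfl fun k _ => mul_comm _ _
        rw [this]; norm_num
      rw [Finset.sum_range_succ'] at h3
      rw [← h3, add_div, Finset.sum_div]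
      simp only [pow_zero, sub_self, mul_zero, zero_div, add_zero]
      refine Finset.sum_congr rfl fun k _ => ?_
      have h4 : ((n + 1 : ℕ) : ℝ) * n.choose k = (n + 1).choose (k + 1) * ((k + 1 : ℕ) : ℝ) := by
        exact_mod_cast Nat.add_one_mul_choose_eq n k
      have hn : ((n + 1 : ℕ) : ℝ) ≠ 0 := by positivity
      have hk : ((k + 1 : ℕ) : ℝ) ≠ 0 := by positivity
      rw [mul_div_assoc', div_eq_div_iff hk hn]
      linear_combination (1 - (-1 : ℝ) ^ (k + 1)) * h4
    rw [h1, ← h2, ← Finset.sum_add_distrib]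
    simp only [pow_zero, sub_self, mul_zero, zero_div, add_zero]
    refine Finset.sum_congr rfl fun k _ => ?_
    rw [Nat.choose_succ_succ]
    push_cast
    ring

lemma gh_exp (t : ℝ) : HasSum (fun n : ℕ => t ^ n / (n.factorial : ℝ)) (Real.exp t) := by
  rw [Real.exp_eq_exp_ℝ]
  exact NormedSpace.expSeries_div_hasSum_exp t

lemma gh_abs (n : ℕ) : |1 - (-1 : ℝ) ^ n| ≤ 2 := by
  rcases neg_one_pow_eq_or ℝ n with h | h <;> rw [h] <;> norm_num

lemma gh_int (x : ℝ) :
    HasSum (fun n : ℕ => (1 - (-1 : ℝ) ^ (n + 1)) * x ^ (n + 1) /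
          (((n : ℝ) + 1) * (Nat.factorial (n + 1) : ℝ)))
      (∫ t in (0 : ℝ)..x, (Real.exp t - Real.exp (-t)) / t) := by
  have key := intervalIntegral.hasSum_integral_of_dominated_convergence (μ := volume)
    (a := 0) (b := x)
    (F := fun (n : ℕ) (t : ℝ) => (1 - (-1 : ℝ) ^ (n + 1)) / (Nat.factorial (n + 1) : ℝ) * t ^ n)
    (f := fun t => (Real.exp t - Real.exp (-t)) / t)
    (fun n _ => 2 * (|x| ^ n / (n.factorial : ℝ)))
    (fun n => by
      apply Continuous.aestronglyMeasurable
      fun_prop)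
    (fun n => by
      refine Filter.Eventually.of_forall fun t ht => ?_
      have hx : |t| ≤ |x| := by
        rcases Set.mem_uIoc.1 ht with h | h
        · rw [abs_of_pos h.1, abs_of_pos (h.1.trans_le h.2)]; exact h.2
        · rw [abs_of_nonpos h.2, abs_of_nonpos (h.1.le.trans h.2)]; linarith [h.1]
      have hf : (n.factorial : ℝ) ≤ ((n + 1).factorial : ℝ) := by
        exact_mod_cast Nat.factorial_le (Nat.le_succ n)
      have hp : (0 : ℝ) < n.factorial := by positivity
      rw [Real.norm_eq_abs, abs_mul, abs_div, abs_pow, Nat.abs_cast]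
      calc _ ≤ 2 / (n.factorial : ℝ) * |x| ^ n := by
            gcongr
            exact gh_abs _
        _ = _ := by ring)
    (Filter.Eventually.of_forall fun t _ => (Real.summable_pow_div_factorial |x|).mul_left 2)
    (by simp)
    (by
      have h0 : ∀ᵐ t : ℝ, t ≠ 0 := by
        simp [ae_iff]
      filter_upwards [h0] with t ht _
      have h := (gh_exp t).sub (gh_exp (-t))
      rw [← hasSum_nat_add_iff' 1] at h
      simp only [Finset.sum_range_one, pow_zero, sub_self, sub_zero] at h
      convert! h.div_const t using 2 with n
      rw [neg_pow t]
      field_simp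
      ring)
  convert! key using 2 with n
  rw [intervalIntegral.integral_const_mul, integral_pow]
  simp
  field_simp

theorem geoharmonic_exponential_generating_function
    (G : ℕ → ℝ) (hG : ∀ n, G n = ∑ k ∈ Finset.Icc 1 n, (2 : ℝ) ^ k / (k : ℝ))
    (x : ℝ) :
    HasSum (fun n : ℕ => G (n + 1) / (Nat.factorial (n + 1) : ℝ) * x ^ (n + 1))
      (Real.exp x * ∫ t in (0 : ℝ)..x, (Real.exp t - Real.exp (-t)) / t) ∧
    HasSum
      (fun n : ℕ => Real.exp x *
        ((1 + (-1 : ℝ) ^ (n + 1 + 1)) * x ^ (n + 1) /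
          (((n : ℝ) + 1) * (Nat.factorial (n + 1) : ℝ))))
      (Real.exp x * ∫ t in (0 : ℝ)..x, (Real.exp t - Real.exp (-t)) / t) := by
  have hI := gh_int x
  refine ⟨?_, ?_⟩
  · set I := ∫ t in (0 : ℝ)..x, (Real.exp t - Real.exp (-t)) / t
    let a : ℕ → ℝ := fun n => (1 - (-1 : ℝ) ^ n) / (n : ℝ) * (x ^ n / (n.factorial : ℝ))
    let e : ℕ → ℝ := fun n => x ^ n / (n.factorial : ℝ)
    have ha : HasSum a I := by
      rw [← hasSum_nat_add_iff' 1]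
      simp only [Finset.sum_range_one]
      convert! hI using 2 with n
      · simp only [a]
        push_cast
        rw [div_mul_div_comm]
      · simp [a]
    have hen : Summable (fun n => ‖e n‖) := (Real.summable_pow_div_factorial x).norm
    have han : Summable (fun n => ‖a n‖) := ha.summable.norm
    have hs := (summable_norm_sum_mul_range_of_summable_norm han hen).of_norm.hasSum
    rw [← tsum_mul_tsum_eq_tsum_sum_range_of_summable_norm han hen, ha.tsum_eq,
      (gh_exp x).tsum_eq, mul_comm, ← hasSum_nat_add_iff' 1] at hs
    have hz : ∑ i ∈ Finset.range 1, ∑ k ∈ Finset.range (i + 1), a k * e (i - k) = 0 := by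
      simp [a]
    rw [hz, sub_zero] at hs
    convert! hs using 2 with n
    rw [hG, ← gh_comb, Finset.sum_div, Finset.sum_mul]
    refine Finset.sum_congr rfl fun k hk => ?_
    have hk' : k ≤ n + 1 := by
      have := Finset.mem_range.1 hk
      omega
    simp only [a, e]
    rw [Nat.cast_choose ℝ hk', ← Nat.add_sub_of_le hk', pow_add, Nat.add_sub_cancel_left]
    have := Nat.factorial_ne_zero (k + (n + 1 - k))
    field_simp
  · convert! hI.mul_left (Real.exp x) using 5 with n
    ring
end
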